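/- arXiv:1003.5072 — 2 statements merged into one kernel-verified Lean document; each statement's English description precedes it below -/
import Mathlib

section
/- Let n ≥ 1, t > 0, a ∈ ℝ and let 1 < q₁ < q₂ satisfy q₂ − 1 = e^{2t}(q₁ e^{−a} − 1). Then for every measurable function f : ℝ^n → ℝ with 0 < c ≤ f ≤ C for some constants c, C, one has ‖N_t f‖_{L^{q₂}(γ)} ≤ M^{n/2} · ‖T_{−a} f‖_{L^{q₁}(γ)}, where M = ( (q₁−1)/e^{−2t} )^{1−1/q₁} · ( (q₂−1)/e^{−a} )^{1/q₂−1} · ( (1−e^{−2t})/(q₂−q₁) )^{1/q₂−1/q₁} (dimensional hypercontractive bound for the Ornstein–Uhlenbeck semigroup). -/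
open MeasureTheory Real

noncomputable def gaussianMeasure (n : ℕ) : Measure (EuclideanSpace ℝ (Fin n)) :=
  volume.withDensity fun x => ENNReal.ofReal ((2 * π) ^ (-(n : ℝ) / 2) * Real.exp (-‖x‖ ^ 2 / 2))

/-- Ornstein-Uhlenbeck semigroup via the Mehler formula. -/
noncomputable def OU (n : ℕ) (t : ℝ) (f : EuclideanSpace ℝ (Fin n) → ℝ)
    (x : EuclideanSpace ℝ (Fin n)) : ℝ :=
  ∫ y, f (Real.exp (-t) • x + Real.sqrt (1 - Real.exp (-2 * t)) • y) ∂(gaussianMeasure n)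

/-- Dilation semigroup: `T_a f (x) = f (e^{a/2} x)`. -/
noncomputable def dilation (n : ℕ) (a : ℝ) (f : EuclideanSpace ℝ (Fin n) → ℝ)
    (x : EuclideanSpace ℝ (Fin n)) : ℝ :=
  f (Real.exp (a / 2) • x)

open ProbabilityTheory Filter Topology
open scoped RealInnerProductSpace ENNReal

/-! ### The standard Gaussian measure -/

lemma charFun_gaussianMeasure (n : ℕ) (t : EuclideanSpace ℝ (Fin n)) :
    charFun (gaussianMeasure n) t = Complex.exp (-‖t‖ ^ 2 / 2) := by
  have hm : Measurable fun x : EuclideanSpace ℝ (Fin n) =>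
      (2 * π) ^ (-(n : ℝ) / 2) * Real.exp (-‖x‖ ^ 2 / 2) := by fun_prop
  rw [charFun_apply, gaussianMeasure,
    integral_withDensity_eq_integral_toReal_smul (by fun_prop) (by simp)]
  have h := GaussianFourier.integral_cexp_neg_mul_sq_norm_add (V := EuclideanSpace ℝ (Fin n))
    (b := (1 / 2 : ℂ)) (by norm_num) Complex.I t
  have e : ∀ x : EuclideanSpace ℝ (Fin n),
      (ENNReal.ofReal ((2 * π) ^ (-(n : ℝ) / 2) * Real.exp (-‖x‖ ^ 2 / 2))).toReal •
        Complex.exp (⟪x, t⟫ * Complex.I) = (((2 * π) ^ (-(n : ℝ) / 2) : ℝ) : ℂ) *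
        Complex.exp (-(1 / 2 : ℂ) * ‖x‖ ^ 2 + Complex.I * ⟪t, x⟫) := by
    intro x
    rw [ENNReal.toReal_ofReal (by positivity), Complex.real_smul, Complex.ofReal_mul, mul_assoc,
      Complex.ofReal_exp, ← Complex.exp_add, real_inner_comm]
    congr 2
    push_cast
    ring
  simp_rw [e]
  rw [integral_const_mul, h, finrank_euclideanSpace_fin]
  have e2 : ((π : ℂ) / (1 / 2)) = ((2 * π : ℝ) : ℂ) := by push_cast; ring
  have e3 : ((n : ℂ) / 2) = (((n : ℝ) / 2 : ℝ) : ℂ) := by push_cast; ring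
  rw [e2, e3, ← Complex.ofReal_cpow (by positivity), ← mul_assoc, ← Complex.ofReal_mul,
    ← Real.rpow_add (by positivity), neg_div, neg_add_cancel, Real.rpow_zero, Complex.ofReal_one,
    one_mul, Complex.I_sq]
  congr 1
  ring

lemma gaussianMeasure_eq_stdGaussian (n : ℕ) :
    gaussianMeasure n = stdGaussian (EuclideanSpace ℝ (Fin n)) := by
  have hfin : IsFiniteMeasure (gaussianMeasure n) := by
    refine isFiniteMeasure_withDensity_ofReal ?_
    have h := GaussianFourier.integrable_cexp_neg_mul_sq_norm_add (V := EuclideanSpace ℝ (Fin n))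
      (b := (1 / 2 : ℂ)) (by norm_num) 0 0
    refine (Integrable.const_mul ?_ _).hasFiniteIntegral
    refine h.re.congr (.of_forall fun x => ?_)
    have : (-(1 / 2 : ℂ) * ‖x‖ ^ 2 + 0 * ⟪(0 : EuclideanSpace ℝ (Fin n)), x⟫) =
        ((-‖x‖ ^ 2 / 2 : ℝ) : ℂ) := by
      push_cast; ring
    beta_reduce
    rw [this, ← Complex.ofReal_exp]
    exact Complex.ofReal_re _
  apply Measure.ext_of_charFun
  ext t
  rw [charFun_gaussianMeasure, charFun_stdGaussian]

section StdGaussian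

variable {E : Type*} [NormedAddCommGroup E] [InnerProductSpace ℝ E] [FiniteDimensional ℝ E]
  [MeasurableSpace E] [BorelSpace E]

lemma integrable_norm_pow_stdGaussian (k : ℕ) : Integrable (fun x : E => ‖x‖ ^ k) (stdGaussian E) :=
  (IsGaussian.memLp_id (stdGaussian E) (k : ℝ≥0∞) (by simp)).integrable_norm_pow'

lemma integral_inner_stdGaussian (v : E) : ∫ x, ⟪v, x⟫ ∂stdGaussian E = 0 :=
  integral_strongDual_stdGaussian (innerSL ℝ v)

lemma integral_inner_mul_inner_stdGaussian (v w : E) :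
    ∫ x, ⟪v, x⟫ * ⟪w, x⟫ ∂stdGaussian E = ⟪v, w⟫ := by
  have h := covarianceBilin_apply (μ := stdGaussian E) IsGaussian.memLp_two_id v w
  rw [covarianceBilin_stdGaussian] at h
  rw [innerSL_apply_apply] at h
  simpa using h.symm

lemma map_smul_add_smul_stdGaussian_prod (r e : ℝ) :
    ((stdGaussian E).prod (stdGaussian E)).map (fun p => r • p.1 + e • p.2) =
      (stdGaussian E).map (fun x => √(r ^ 2 + e ^ 2) • x) := by
  have h1 : ((stdGaussian E).prod (stdGaussian E)).map (fun p : E × E => r • p.1 + e • p.2) =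
      ((stdGaussian E).map (r • ·)).conv ((stdGaussian E).map (e • ·)) := by
    rw [Measure.conv, Measure.map_prod_map _ _ (by fun_prop) (by fun_prop),
      Measure.map_map (by fun_prop) (by fun_prop)]
    rfl
  have : IsProbabilityMeasure ((stdGaussian E).map (r • ·)) :=
    Measure.isProbabilityMeasure_map (by fun_prop)
  have : IsProbabilityMeasure ((stdGaussian E).map (e • ·)) :=
    Measure.isProbabilityMeasure_map (by fun_prop)
  have : IsProbabilityMeasure ((stdGaussian E).map (fun x => √(r ^ 2 + e ^ 2) • x)) :=
    Measure.isProbabilityMeasure_map (by fun_prop)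
  rw [h1]
  apply Measure.ext_of_charFun
  ext t
  rw [charFun_conv, charFun_map_smul, charFun_map_smul, charFun_map_smul, charFun_stdGaussian,
    charFun_stdGaussian, charFun_stdGaussian, ← Complex.exp_add]
  congr 1
  simp only [norm_smul, Real.norm_eq_abs, Complex.ofReal_mul, mul_pow, ← Complex.ofReal_pow, sq_abs]
  rw [Real.sq_sqrt (by positivity)]
  push_cast
  ring

lemma integral_integral_smul_add_smul_stdGaussian {f : E → ℝ} (hf : Measurable f) {C : ℝ}
    (hC : ∀ x, |f x| ≤ C) (r e : ℝ) :
    ∫ x, ∫ y, f (r • x + e • y) ∂stdGaussian E ∂stdGaussian E =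
      ∫ x, f (√(r ^ 2 + e ^ 2) • x) ∂stdGaussian E := by
  rw [← integral_prod (f := fun p : E × E => f (r • p.1 + e • p.2))
    (.of_bound (hf.comp (by fun_prop)).aestronglyMeasurable C (.of_forall fun _ => hC _)),
    ← integral_map (φ := fun p : E × E => r • p.1 + e • p.2) (by fun_prop)
      hf.aestronglyMeasurable,
    map_smul_add_smul_stdGaussian_prod, integral_map (by fun_prop) hf.aestronglyMeasurable]

end StdGaussian

/-! ### Second-order expansion of `u ^ α * v ^ β` -/

lemma exists_abs_one_add_rpow_sub_le {α M : ℝ} (hα : 0 ≤ α) :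
    ∃ K, 0 ≤ K ∧ ∀ a, -1 ≤ a → a ≤ M →
      |(1 + a) ^ α - (1 + α * a + α * (α - 1) / 2 * a ^ 2)| ≤ K * |a| ^ 3 := by
  have hO := (Real.one_add_rpow_hasFPowerSeriesAt_zero (a := α)).isBigO_sub_partialSum_pow 3
  obtain ⟨K₁, hK₁⟩ := hO.bound
  obtain ⟨δ, hδ, hball⟩ := Metric.eventually_nhds_iff.1 hK₁
  have hpoly : ∀ y : ℝ, (binomialSeries ℝ α).partialSum 3 y =
      1 + α * y + α * (α - 1) / 2 * y ^ 2 := by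
    intro y
    have h2 : Ring.choose α 2 = α * (α - 1) / 2 := by
      rw [Ring.choose_eq_smul]
      simp [descPochhammer, Polynomial.smeval_sub, Polynomial.smeval_mul]
      ring
    simp [FormalMultilinearSeries.partialSum, Finset.sum_range_succ, binomialSeries, h2]
    ring
  set B : ℝ := (1 + |M|) ^ α + (1 + α * (1 + |M|) + α * |α - 1| / 2 * (1 + |M|) ^ 2)
  have hB : 0 ≤ B := by positivity
  refine ⟨max K₁ 0 + B / δ ^ 3, by positivity, fun a ha haM => ?_⟩
  rcases lt_or_ge |a| δ with h | h
  · have := hball (y := a) (by simpa using h)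
    rw [hpoly, zero_add] at this
    simp only [Real.norm_eq_abs, abs_pow, abs_abs] at this
    refine this.trans ?_
    gcongr
    exact (le_max_left _ _).trans (le_add_of_nonneg_right (by positivity))
  · have haM' : |a| ≤ 1 + |M| := abs_le.2 ⟨by linarith [abs_nonneg M], by linarith [le_abs_self M]⟩
    have h1 : |(1 + a) ^ α| ≤ (1 + |M|) ^ α := by
      rw [abs_of_nonneg (Real.rpow_nonneg (by linarith) _)]
      exact Real.rpow_le_rpow (by linarith) (by linarith [le_abs_self M]) hα
    have h2 : |1 + α * a + α * (α - 1) / 2 * a ^ 2| ≤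
        1 + α * (1 + |M|) + α * |α - 1| / 2 * (1 + |M|) ^ 2 := by
      refine (abs_add_le _ _).trans (add_le_add ((abs_add_le _ _).trans ?_) ?_)
      · rw [abs_one, abs_mul, abs_of_nonneg hα]
        gcongr
      · rw [abs_mul, abs_div, abs_mul, abs_of_nonneg hα, abs_pow, abs_two]
        gcongr
    calc _ ≤ B := (abs_sub _ _).trans (add_le_add h1 h2)
      _ = B / δ ^ 3 * δ ^ 3 := by field_simp
      _ ≤ (max K₁ 0 + B / δ ^ 3) * |a| ^ 3 := by
        gcongr
        exact le_add_of_nonneg_left (le_max_right _ _)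

lemma abs_mul_sub_mul_le {A T x y x₀ y₀ : ℝ} (hx₀ : |x₀| ≤ A * T) (hy : |y| ≤ A * T)
    (hx : |x - x₀| ≤ A * T ^ 2) (hy' : |y - y₀| ≤ A * T ^ 2) :
    |x * y - x₀ * y₀| ≤ 2 * A ^ 2 * T ^ 3 := by
  calc |x * y - x₀ * y₀| = |(x - x₀) * y + x₀ * (y - y₀)| := by ring_nf
    _ ≤ |x - x₀| * |y| + |x₀| * |y - y₀| := by
      rw [← abs_mul, ← abs_mul]; exact abs_add_le _ _
    _ ≤ A * T ^ 2 * (A * T) + A * T * (A * T ^ 2) := by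
      refine add_le_add (mul_le_mul hx hy (abs_nonneg _) ((abs_nonneg _).trans hx))
        (mul_le_mul hx₀ hy' (abs_nonneg _) ((abs_nonneg _).trans hx₀))
    _ = _ := by ring

lemma abs_quadratic_add_cubic_le {θ κ x k₀ M : ℝ} (hθ : 0 < θ) (hθ1 : θ < 1) (hκ : 0 ≤ κ)
    (hκk : κ ≤ k₀) (hx : |x| ≤ M + 1) :
    |θ * (θ - 1) / 2 * x ^ 2 + κ * |x| ^ 3| ≤ (1 + k₀ * (M + 1)) * x ^ 2 := by
  have e1 : |θ * (θ - 1) / 2| ≤ 1 := abs_le.2 ⟨by nlinarith, by nlinarith⟩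
  have hM : 0 ≤ M + 1 := (abs_nonneg _).trans hx
  calc _ ≤ |θ * (θ - 1) / 2 * x ^ 2| + |κ * |x| ^ 3| := abs_add_le _ _
    _ = |θ * (θ - 1) / 2| * |x| ^ 2 + κ * (|x| * |x| ^ 2) := by
      rw [abs_mul, abs_mul, abs_pow, abs_of_nonneg hκ, abs_pow, abs_abs]; ring
    _ ≤ 1 * |x| ^ 2 + k₀ * ((M + 1) * |x| ^ 2) := by
      have := hκ.trans hκk
      gcongr
    _ = (1 + k₀ * (M + 1)) * x ^ 2 := by rw [sq_abs]; ring

lemma exists_rpow_mul_rpow_le {α β M A : ℝ} (hα : 0 < α) (hα1 : α < 1) (hβ : 0 < β) (hβ1 : β < 1)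
    (hM : 0 ≤ M) (hA : 0 ≤ A) :
    ∃ K, 0 ≤ K ∧ ∀ a b a₀ b₀ T : ℝ, 0 ≤ T → -1 ≤ a → a ≤ M → -1 ≤ b → b ≤ M →
      |a| ≤ A * T → |b| ≤ A * T → |a₀| ≤ A * T → |b₀| ≤ A * T →
      |a - a₀| ≤ A * T ^ 2 → |b - b₀| ≤ A * T ^ 2 →
      (1 + a) ^ α * (1 + b) ^ β ≤ 1 + α * a + β * b +
        (α * (α - 1) * a₀ ^ 2 + 2 * (α * β) * (a₀ * b₀) + β * (β - 1) * b₀ ^ 2) / 2 +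
        K * T ^ 3 := by
  have hα2 : |α * (α - 1)| ≤ 1 := abs_le.2 ⟨by nlinarith, by nlinarith⟩
  have hβ2 : |β * (β - 1)| ≤ 1 := abs_le.2 ⟨by nlinarith, by nlinarith⟩
  have hαβ : |α * β| ≤ 1 := abs_le.2 ⟨by nlinarith, by nlinarith⟩
  obtain ⟨k₁, hk₁, h₁⟩ := exists_abs_one_add_rpow_sub_le (α := α) (M := M) hα.le
  obtain ⟨k₂, hk₂, h₂⟩ := exists_abs_one_add_rpow_sub_le (α := β) (M := M) hβ.le
  set k : ℝ := 1 + (k₁ + k₂) * (M + 1) with hk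
  have hk0 : 0 ≤ k := by positivity
  refine ⟨k₁ * A ^ 3 + k₂ * A ^ 3 + k * A ^ 3 + k * A ^ 3 + k * k * (M + 1) * A ^ 3 +
    3 * (2 * A ^ 2), by positivity, ?_⟩
  intro a b a₀ b₀ T hT ha haM hb hbM haT hbT ha₀T hb₀T hda hdb
  have haM' : |a| ≤ M + 1 := abs_le.2 ⟨by linarith, by linarith⟩
  have hbM' : |b| ≤ M + 1 := abs_le.2 ⟨by linarith, by linarith⟩
  set u : ℝ := α * (α - 1) / 2 * a ^ 2 + k₁ * |a| ^ 3 with hu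
  set v : ℝ := β * (β - 1) / 2 * b ^ 2 + k₂ * |b| ^ 3 with hv
  have hp : (1 + a) ^ α ≤ 1 + α * a + u := by linarith [(abs_le.1 (h₁ a ha haM)).2]
  have hr : (1 + b) ^ β ≤ 1 + β * b + v := by linarith [(abs_le.1 (h₂ b hb hbM)).2]
  have hp0 : 0 ≤ (1 + a) ^ α := Real.rpow_nonneg (by linarith) _
  have hr0 : 0 ≤ (1 + b) ^ β := Real.rpow_nonneg (by linarith) _
  have hu' : |u| ≤ k * a ^ 2 := abs_quadratic_add_cubic_le hα hα1 hk₁ (by linarith) haM'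
  have hv' : |v| ≤ k * b ^ 2 := abs_quadratic_add_cubic_le hβ hβ1 hk₂ (by linarith) hbM'
  have hprod : (1 + a) ^ α * (1 + b) ^ β ≤ (1 + α * a + u) * (1 + β * b + v) :=
    mul_le_mul hp hr hr0 (hp0.trans hp)
  have ha3 : k₁ * |a| ^ 3 ≤ k₁ * A ^ 3 * T ^ 3 := by
    rw [mul_assoc, ← mul_pow]; gcongr
  have hb3 : k₂ * |b| ^ 3 ≤ k₂ * A ^ 3 * T ^ 3 := by
    rw [mul_assoc, ← mul_pow]; gcongr
  have hav : α * a * v ≤ k * A ^ 3 * T ^ 3 := by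
    calc _ ≤ |α * a * v| := le_abs_self _
      _ = α * |a| * |v| := by rw [abs_mul, abs_mul, abs_of_pos hα]
      _ ≤ 1 * (A * T) * (k * (A * T) ^ 2) := by
        gcongr
        exact hv'.trans (by rw [← sq_abs]; gcongr)
      _ = _ := by ring
  have hbu : β * b * u ≤ k * A ^ 3 * T ^ 3 := by
    calc _ ≤ |β * b * u| := le_abs_self _
      _ = β * |b| * |u| := by rw [abs_mul, abs_mul, abs_of_pos hβ]
      _ ≤ 1 * (A * T) * (k * (A * T) ^ 2) := by
        gcongr
        exact hu'.trans (by rw [← sq_abs]; gcongr)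
      _ = _ := by ring
  have huv : u * v ≤ k * k * (M + 1) * A ^ 3 * T ^ 3 := by
    calc _ ≤ |u * v| := le_abs_self _
      _ = |u| * |v| := abs_mul _ _
      _ ≤ (k * a ^ 2) * (k * b ^ 2) := by gcongr
      _ = k * k * |a| * (|a| * |b| ^ 2) := by rw [← sq_abs a, ← sq_abs b]; ring
      _ ≤ k * k * (M + 1) * ((A * T) * (A * T) ^ 2) := by gcongr
      _ = _ := by ring
  set δ : ℝ := 2 * A ^ 2 * T ^ 3 with hδ
  have hδ0 : 0 ≤ δ := by positivity
  have hle : ∀ κ x : ℝ, |κ| ≤ 1 → |x| ≤ δ → κ * x ≤ δ := fun κ x hκ hx =>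
    calc κ * x ≤ |κ| * |x| := by rw [← abs_mul]; exact le_abs_self _
      _ ≤ 1 * δ := by gcongr
      _ = δ := one_mul _
  have q1 := hle (α * (α - 1)) _ hα2
    (abs_mul_sub_mul_le ha₀T haT hda hda)
  have q2 := hle (β * (β - 1)) _ hβ2
    (abs_mul_sub_mul_le hb₀T hbT hdb hdb)
  have q3 := hle (α * β) _ hαβ
    (abs_mul_sub_mul_le ha₀T hbT hda hdb)
  have hexp : (1 + α * a + u) * (1 + β * b + v) = 1 + α * a + β * b +
      (α * (α - 1) * a₀ ^ 2 + 2 * (α * β) * (a₀ * b₀) + β * (β - 1) * b₀ ^ 2) / 2 +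
      (α * (α - 1) * (a * a - a₀ * a₀) / 2 + β * (β - 1) * (b * b - b₀ * b₀) / 2 +
        α * β * (a * b - a₀ * b₀)) + (k₁ * |a| ^ 3 + k₂ * |b| ^ 3 + α * a * v + β * b * u +
          u * v) := by
    rw [hu, hv]; ring
  rw [hexp] at hprod
  linarith

/-! ### Gaussian averages of functions with Lipschitz gradient -/

lemma abs_integral_le_of_abs_le {Ω : Type*} [MeasurableSpace Ω] {μ : Measure Ω}
    [IsProbabilityMeasure μ] {f : Ω → ℝ} {C : ℝ} (h : ∀ x, |f x| ≤ C) : |∫ x, f x ∂μ| ≤ C := by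
  simpa using norm_integral_le_of_norm_le_const (μ := μ) (f := f) (.of_forall h)

section Smooth

variable {E : Type*} [NormedAddCommGroup E] [InnerProductSpace ℝ E] [MeasurableSpace E]

/-- `F` takes values in `[c, C]`, is `L`-Lipschitz, and `D` is a bounded gradient of `F` with a
uniform quadratic bound on the first-order Taylor remainder. -/
structure HasControlledGradient (c C L : ℝ) (F : E → ℝ) (D : E → E) : Prop where
  measurable : Measurable F
  measurable_grad : Measurable D
  lower : ∀ x, c ≤ F x
  upper : ∀ x, F x ≤ C
  norm_grad_le : ∀ x, ‖D x‖ ≤ L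
  lipschitz : ∀ x h, |F (x + h) - F x| ≤ L * ‖h‖
  taylor : ∀ x h, |F (x + h) - F x - ⟪D x, h⟫| ≤ L * ‖h‖ ^ 2

lemma HasControlledGradient.norm_le {c C L : ℝ} {F : E → ℝ} {D : E → E}
    (h : HasControlledGradient c C L F D) (hc : 0 < c) (x : E) : ‖F x‖ ≤ C := by
  rw [Real.norm_eq_abs, abs_of_nonneg (hc.le.trans (h.lower x))]
  exact h.upper x

variable [FiniteDimensional ℝ E] [BorelSpace E]

/-- The average of `F` over the Gaussian of standard deviation `r` centred at `x`. -/
noncomputable def gaussianAvg {V : Type*} [NormedAddCommGroup V] [NormedSpace ℝ V]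
    (r : ℝ) (F : E → V) (x : E) : V :=
  ∫ z, F (x + r • z) ∂stdGaussian E

lemma integrable_translate {V : Type*} [NormedAddCommGroup V] [MeasurableSpace V] [BorelSpace V]
    [SecondCountableTopology V] {F : E → V} (hF : Measurable F) {C : ℝ} (hC : ∀ x, ‖F x‖ ≤ C)
    (r : ℝ) (x : E) : Integrable (fun z => F (x + r • z)) (stdGaussian E) :=
  .of_bound (hF.comp (by fun_prop)).aestronglyMeasurable C (.of_forall fun _ => hC _)

lemma measurable_gaussianAvg {V : Type*} [NormedAddCommGroup V] [NormedSpace ℝ V]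
    [MeasurableSpace V] [BorelSpace V] [SecondCountableTopology V] {F : E → V} (hF : Measurable F)
    (r : ℝ) : Measurable (gaussianAvg r F) := by
  refine StronglyMeasurable.measurable ?_
  refine StronglyMeasurable.integral_prod_right (f := fun x z : E => F (x + r • z)) ?_
  exact (hF.comp (by fun_prop : Measurable fun p : E × E => p.1 + r • p.2)).stronglyMeasurable

namespace HasControlledGradient

variable {c C L : ℝ} {F : E → ℝ} {D : E → E}

lemma integrable (h : HasControlledGradient c C L F D) (hc : 0 < c) (r : ℝ) (x : E) :
    Integrable (fun z => F (x + r • z)) (stdGaussian E) :=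
  integrable_translate h.measurable (h.norm_le hc) r x

lemma avg (h : HasControlledGradient c C L F D) (hc : 0 < c) (r : ℝ) :
    HasControlledGradient c C L (gaussianAvg r F) (gaussianAvg r D) where
  measurable := measurable_gaussianAvg h.measurable r
  measurable_grad := measurable_gaussianAvg h.measurable_grad r
  lower x := by
    simpa [gaussianAvg] using integral_mono (integrable_const c) (h.integrable hc r x)
      fun z => h.lower _
  upper x := by
    simpa [gaussianAvg] using integral_mono (h.integrable hc r x) (integrable_const C)
      fun z => h.upper _
  norm_grad_le x := by
    simpa [gaussianAvg] using norm_integral_le_of_norm_le_const (μ := stdGaussian E)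
      (.of_forall fun z => h.norm_grad_le (x + r • z))
  lipschitz x v := by
    rw [gaussianAvg, gaussianAvg,
      ← integral_sub (h.integrable hc r _) (h.integrable hc r x)]
    refine abs_integral_le_of_abs_le fun z => ?_
    rw [add_right_comm]
    exact h.lipschitz _ _
  taylor x v := by
    have hD : Integrable (fun z => D (x + r • z)) (stdGaussian E) :=
      integrable_translate h.measurable_grad h.norm_grad_le r x
    have hF : Integrable (fun z => F (x + v + r • z) - F (x + r • z)) (stdGaussian E) :=
      (h.integrable hc r _).sub (h.integrable hc r x)
    rw [gaussianAvg, gaussianAvg, gaussianAvg,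
      ← integral_sub (h.integrable hc r _) (h.integrable hc r x), real_inner_comm,
      ← integral_inner hD, ← integral_sub hF (hD.const_inner v)]
    refine abs_integral_le_of_abs_le fun z => ?_
    rw [add_right_comm, real_inner_comm]
    exact h.taylor _ _

lemma abs_gaussianAvg_sub_le (h : HasControlledGradient c C L F D) (hc : 0 < c) {ε : ℝ}
    (hε : 0 ≤ ε) (x : E) :
    |gaussianAvg ε F x - F x| ≤ L * ε * ∫ z : E, ‖z‖ ∂stdGaussian E := by
  have e : gaussianAvg ε F x - F x = ∫ z, (F (x + ε • z) - F x) ∂stdGaussian E := by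
    rw [integral_sub (h.integrable hc ε x) (integrable_const _)]
    simp [gaussianAvg]
  rw [e, ← integral_const_mul, ← Real.norm_eq_abs]
  refine norm_integral_le_of_norm_le
    (by simpa using (integrable_norm_pow_stdGaussian (E := E) 1).const_mul (L * ε))
    (.of_forall fun z => ?_)
  have := h.lipschitz x (ε • z)
  rwa [norm_smul, Real.norm_of_nonneg hε, ← mul_assoc] at this

lemma abs_gaussianAvg_sub_le_sq (h : HasControlledGradient c C L F D) (hc : 0 < c)
    (ε : ℝ) (x : E) :
    |gaussianAvg ε F x - F x| ≤ L * ε ^ 2 * ∫ z : E, ‖z‖ ^ 2 ∂stdGaussian E := by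
  have hi : Integrable (fun z => ⟪D x, ε • z⟫) (stdGaussian E) := by
    simpa only [id, inner_smul_right] using
      (IsGaussian.integrable_id (μ := stdGaussian E)).const_inner (D x) |>.const_mul ε
  have hF : Integrable (fun z => F (x + ε • z) - F x) (stdGaussian E) :=
    (h.integrable hc ε x).sub (integrable_const _)
  have e : gaussianAvg ε F x - F x =
      ∫ z, (F (x + ε • z) - F x - ⟪D x, ε • z⟫) ∂stdGaussian E := by
    rw [integral_sub hF hi,
      integral_sub (h.integrable hc ε x) (integrable_const _)]
    simp [gaussianAvg, inner_smul_right, integral_const_mul, integral_inner_stdGaussian]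
  rw [e, ← integral_const_mul, ← Real.norm_eq_abs]
  refine norm_integral_le_of_norm_le
    ((integrable_norm_pow_stdGaussian (E := E) 2).const_mul (L * ε ^ 2))
    (.of_forall fun z => ?_)
  have := h.taylor x (ε • z)
  rwa [norm_smul, mul_pow, Real.norm_eq_abs, sq_abs, ← mul_assoc] at this

lemma increment_bounds (h : HasControlledGradient c C L F D) (hc : 0 < c) (hL : 0 ≤ L)
    {ε R m : ℝ} (hε : 0 ≤ ε) (hR : 1 ≤ R)
    (hm : m = (∫ z : E, ‖z‖ ∂stdGaussian E) + ∫ z : E, ‖z‖ ^ 2 ∂stdGaussian E)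
    (x : E) {X : E} (hX : ‖X‖ ≤ R) :
    let u := gaussianAvg ε F x
    let a := (F (x + ε • X) - u) / u
    let a₀ : ℝ := ε * ⟪u⁻¹ • D x, X⟫
    let A := L * (1 + m) / c
    (-1 ≤ a) ∧ a ≤ C / c ∧ |a| ≤ A * (ε * R) ∧ |a₀| ≤ A * (ε * R) ∧
      |a - a₀| ≤ A * (ε * R) ^ 2 := by
  intro u a a₀ A
  have hm1 : 0 ≤ ∫ z : E, ‖z‖ ∂stdGaussian E := integral_nonneg fun _ => norm_nonneg _
  have hm2 : 0 ≤ ∫ z : E, ‖z‖ ^ 2 ∂stdGaussian E := integral_nonneg fun _ => by positivity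
  have hm0 : 0 ≤ m := by rw [hm]; positivity
  have hcu : c ≤ u := (h.avg hc ε).lower x
  have hu : 0 < u := hc.trans_le hcu
  have hC : 0 ≤ C := hc.le.trans ((h.lower x).trans (h.upper x))
  have hFpos : 0 < F (x + ε • X) := hc.trans_le (h.lower _)
  have ha : a = F (x + ε • X) / u - 1 := by simp only [a]; field_simp
  have hεX : ‖ε • X‖ = ε * ‖X‖ := by rw [norm_smul, Real.norm_of_nonneg hε]
  have hu1 := h.abs_gaussianAvg_sub_le hc hε x
  have hu2 := h.abs_gaussianAvg_sub_le_sq hc ε x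
  have hdiv : ∀ y B : ℝ, 0 ≤ B → |y| ≤ L * (1 + m) * B → |y / u| ≤ L * (1 + m) / c * B := by
    intro y B hB hy
    rw [abs_div, abs_of_pos hu]
    calc |y| / u ≤ (L * (1 + m) * B) / c := by gcongr
      _ = A * B := by simp only [A]; ring
  refine ⟨?_, ?_, ?_, ?_, ?_⟩
  · rw [ha]; linarith [div_pos hFpos hu]
  · rw [ha]
    have : F (x + ε • X) / u ≤ C / c := by gcongr; exact h.upper _
    linarith
  · refine hdiv _ _ (by positivity) ?_
    calc |F (x + ε • X) - u| = |(F (x + ε • X) - F x) - (u - F x)| := by ring_nf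
      _ ≤ |F (x + ε • X) - F x| + |u - F x| := abs_sub _ _
      _ ≤ L * (ε * R) + L * ε * (m * R) := by
        refine add_le_add ((h.lipschitz x _).trans ?_) (hu1.trans ?_)
        · rw [hεX]; gcongr
        · gcongr
          calc _ ≤ m := by rw [hm]; linarith
            _ ≤ m * R := le_mul_of_one_le_right hm0 hR
      _ = L * (1 + m) * (ε * R) := by ring
  · have : a₀ = ⟪D x, ε • X⟫ / u := by
      simp only [a₀, real_inner_smul_left, real_inner_smul_right]; ring
    rw [this]
    refine hdiv _ _ (by positivity) ?_
    calc |⟪D x, ε • X⟫| ≤ ‖D x‖ * ‖ε • X‖ := abs_real_inner_le_norm _ _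
      _ ≤ (L * (1 + m)) * (ε * R) := by
        rw [hεX]
        gcongr
        exact (h.norm_grad_le x).trans (le_mul_of_one_le_right hL (by linarith))
  · have : a - a₀ = (F (x + ε • X) - u - ⟪D x, ε • X⟫) / u := by
      simp only [a, a₀, real_inner_smul_left, real_inner_smul_right]; ring
    rw [this]
    refine hdiv _ _ (by positivity) ?_
    calc |F (x + ε • X) - u - ⟪D x, ε • X⟫|
        = |(F (x + ε • X) - F x - ⟪D x, ε • X⟫) - (u - F x)| := by ring_nf
      _ ≤ |F (x + ε • X) - F x - ⟪D x, ε • X⟫| + |u - F x| := abs_sub _ _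
      _ ≤ L * (ε * R) ^ 2 + L * ε ^ 2 * (m * R ^ 2) := by
        refine add_le_add ((h.taylor x _).trans ?_) (hu2.trans ?_)
        · rw [hεX]; gcongr
        · gcongr
          calc _ ≤ m := by rw [hm]; linarith
            _ ≤ m * R ^ 2 := le_mul_of_one_le_right hm0 (one_le_pow₀ hR)
      _ = L * (1 + m) * (ε * R) ^ 2 := by ring

end HasControlledGradient

end Smooth

/-! ### Infinitesimal two-function hypercontractivity -/

section TwoFunction

lemma correlated_quadratic_nonpos {E : Type*} [NormedAddCommGroup E]
    [InnerProductSpace ℝ E] {α β s : ℝ} (hα : 0 < α) (hα1 : α < 1) (hβ : 0 < β)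
    (hβ1 : β < 1) (hs : s ^ 2 * (α * β) ≤ (1 - α) * (1 - β)) (v u : E) :
    α * (α - 1) * ‖v‖ ^ 2 + 2 * (α * β) * (s * ⟪v, u⟫) + β * (β - 1) * ‖u‖ ^ 2 ≤ 0 := by
  have hp0 : 0 ≤ α * (1 - α) := mul_nonneg hα.le (by linarith)
  have hr0 : 0 ≤ β * (1 - β) := mul_nonneg hβ.le (by linarith)
  set p := √(α * (1 - α)) with hp
  set r := √(β * (1 - β)) with hr
  have hp2 : p ^ 2 = α * (1 - α) := Real.sq_sqrt hp0
  have hr2 : r ^ 2 = β * (1 - β) := Real.sq_sqrt hr0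
  have hpr : |α * β * s| ≤ p * r := by
    refine abs_le_of_sq_le_sq ?_ (by positivity)
    rw [mul_pow, mul_pow p, hp2, hr2]
    nlinarith [mul_pos hα hβ]
  have h1 : α * β * s * ⟪v, u⟫ ≤ p * r * (‖v‖ * ‖u‖) :=
    calc _ ≤ |α * β * s| * |⟪v, u⟫| := by rw [← abs_mul]; exact le_abs_self _
      _ ≤ p * r * (‖v‖ * ‖u‖) := by
        gcongr
        exact abs_real_inner_le_norm v u
  have h2 := sq_nonneg (p * ‖v‖ - r * ‖u‖)
  have h3 : p ^ 2 * ‖v‖ ^ 2 = α * (1 - α) * ‖v‖ ^ 2 := by rw [hp2]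
  have h4 : r ^ 2 * ‖u‖ ^ 2 = β * (1 - β) * ‖u‖ ^ 2 := by rw [hr2]
  nlinarith [h1, h2, h3, h4]

variable {E : Type*} [NormedAddCommGroup E] [InnerProductSpace ℝ E] [FiniteDimensional ℝ E]
  [MeasurableSpace E] [BorelSpace E]

lemma memLp_inner_stdGaussian (v : E) : MemLp (fun z => ⟪v, z⟫) 2 (stdGaussian E) :=
  (IsGaussian.memLp_two_id (μ := stdGaussian E)).const_inner v

lemma integral_inner_fst_mul_inner_fst (v w : E) :
    ∫ p, ⟪v, p.1⟫ * ⟪w, p.1⟫ ∂(stdGaussian E).prod (stdGaussian E) = ⟪v, w⟫ := by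
  rw [integral_fun_fst (fun z => ⟪v, z⟫ * ⟪w, z⟫), integral_inner_mul_inner_stdGaussian]
  simp

lemma integral_inner_snd_mul_inner_snd (v w : E) :
    ∫ p, ⟪v, p.2⟫ * ⟪w, p.2⟫ ∂(stdGaussian E).prod (stdGaussian E) = ⟪v, w⟫ := by
  rw [integral_fun_snd (fun z => ⟪v, z⟫ * ⟪w, z⟫), integral_inner_mul_inner_stdGaussian]
  simp

lemma integral_inner_fst_mul_inner_snd (v w : E) :
    ∫ p, ⟪v, p.1⟫ * ⟪w, p.2⟫ ∂(stdGaussian E).prod (stdGaussian E) = 0 := by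
  rw [integral_prod_mul (fun z => ⟪v, z⟫) (fun z => ⟪w, z⟫), integral_inner_stdGaussian, zero_mul]

/-- The covariance structure of the correlated Gaussian pair `(s z + σ w, z)`. -/
lemma integral_correlated_quadratic {s σ : ℝ} (hs : s ^ 2 + σ ^ 2 = 1) (κ₁ κ₂ κ₃ : ℝ) (v u : E) :
    Integrable (fun p : E × E => κ₁ * ⟪v, s • p.1 + σ • p.2⟫ ^ 2 +
      κ₂ * (⟪v, s • p.1 + σ • p.2⟫ * ⟪u, p.1⟫) + κ₃ * ⟪u, p.1⟫ ^ 2)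
      ((stdGaussian E).prod (stdGaussian E)) ∧
    ∫ p : E × E, (κ₁ * ⟪v, s • p.1 + σ • p.2⟫ ^ 2 +
      κ₂ * (⟪v, s • p.1 + σ • p.2⟫ * ⟪u, p.1⟫) + κ₃ * ⟪u, p.1⟫ ^ 2)
      ∂(stdGaussian E).prod (stdGaussian E) =
    κ₁ * ‖v‖ ^ 2 + κ₂ * (s * ⟪v, u⟫) + κ₃ * ‖u‖ ^ 2 := by
  set μ := (stdGaussian E).prod (stdGaussian E)
  have i11 : ∀ v w : E, Integrable (fun p : E × E => ⟪v, p.1⟫ * ⟪w, p.1⟫) μ := fun v w =>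
    ((memLp_inner_stdGaussian v).integrable_mul (memLp_inner_stdGaussian w)).comp_fst _
  have i22 : ∀ v w : E, Integrable (fun p : E × E => ⟪v, p.2⟫ * ⟪w, p.2⟫) μ := fun v w =>
    ((memLp_inner_stdGaussian v).integrable_mul (memLp_inner_stdGaussian w)).comp_snd _
  have i12 : ∀ v w : E, Integrable (fun p : E × E => ⟪v, p.1⟫ * ⟪w, p.2⟫) μ := fun v w =>
    ((memLp_inner_stdGaussian v).integrable (by norm_num)).mul_prod
      ((memLp_inner_stdGaussian w).integrable (by norm_num))
  have e : ∀ p : E × E, κ₁ * ⟪v, s • p.1 + σ • p.2⟫ ^ 2 +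
      κ₂ * (⟪v, s • p.1 + σ • p.2⟫ * ⟪u, p.1⟫) + κ₃ * ⟪u, p.1⟫ ^ 2 =
      κ₁ * s ^ 2 * (⟪v, p.1⟫ * ⟪v, p.1⟫) + 2 * κ₁ * s * σ * (⟪v, p.1⟫ * ⟪v, p.2⟫) +
      κ₁ * σ ^ 2 * (⟪v, p.2⟫ * ⟪v, p.2⟫) + κ₂ * s * (⟪v, p.1⟫ * ⟪u, p.1⟫) +
      κ₂ * σ * (⟪u, p.1⟫ * ⟪v, p.2⟫) + κ₃ * (⟪u, p.1⟫ * ⟪u, p.1⟫) := by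
    intro p
    simp only [inner_add_right, real_inner_smul_right]
    ring
  simp_rw [e]
  have h1 := (i11 v v).const_mul (κ₁ * s ^ 2)
  have h2 := (i12 v v).const_mul (2 * κ₁ * s * σ)
  have h3 := (i22 v v).const_mul (κ₁ * σ ^ 2)
  have h4 := (i11 v u).const_mul (κ₂ * s)
  have h5 := (i12 u v).const_mul (κ₂ * σ)
  have h6 := (i11 u u).const_mul κ₃
  refine ⟨((((h1.add h2).add h3).add h4).add h5).add h6, ?_⟩
  refine (integral_add' ((((h1.add h2).add h3).add h4).add h5) h6).trans ?_
  rw [integral_add' (((h1.add h2).add h3).add h4) h5, integral_add' ((h1.add h2).add h3) h4,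
    integral_add' (h1.add h2) h3, integral_add' h1 h2]
  simp only [integral_const_mul, μ, integral_inner_fst_mul_inner_fst,
    integral_inner_snd_mul_inner_snd, integral_inner_fst_mul_inner_snd, real_inner_self_eq_norm_sq]
  linear_combination κ₁ * ‖v‖ ^ 2 * hs

lemma integral_correlated_fst {F : E → ℝ} (hF : Measurable F) {C : ℝ} (hC : ∀ x, ‖F x‖ ≤ C)
    {s σ : ℝ} (hs : s ^ 2 + σ ^ 2 = 1) (ε : ℝ) (x : E) :
    ∫ p : E × E, F (x + ε • (s • p.1 + σ • p.2)) ∂(stdGaussian E).prod (stdGaussian E) =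
      gaussianAvg ε F x := by
  have hm : Measurable fun y => F (x + ε • y) := hF.comp (by fun_prop)
  have hi : Integrable (fun p : E × E => F (x + ε • (s • p.1 + σ • p.2)))
      ((stdGaussian E).prod (stdGaussian E)) :=
    .of_bound (hm.comp (by fun_prop : Measurable fun p : E × E =>
      s • p.1 + σ • p.2)).aestronglyMeasurable C (.of_forall fun _ => hC _)
  rw [integral_prod _ hi,
    integral_integral_smul_add_smul_stdGaussian (f := fun y => F (x + ε • y)) hm
      (fun _ => hC _) s σ,
    hs, Real.sqrt_one]
  simp [gaussianAvg]

lemma integrable_cubic : Integrable (fun p : E × E => (1 + ‖p.1‖ + ‖p.2‖) ^ 3)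
    ((stdGaussian E).prod (stdGaussian E)) := by
  have h1 : MemLp (fun p : E × E => ‖p.1‖) 3 ((stdGaussian E).prod (stdGaussian E)) :=
    (IsGaussian.memLp_id (stdGaussian E) 3 (by simp)).norm.comp_measurePreserving
      measurePreserving_fst
  have h2 : MemLp (fun p : E × E => ‖p.2‖) 3 ((stdGaussian E).prod (stdGaussian E)) :=
    (IsGaussian.memLp_id (stdGaussian E) 3 (by simp)).norm.comp_measurePreserving
      measurePreserving_snd
  have h := (((memLp_const (1 : ℝ)).add h1).add h2).integrable_norm_pow (p := 3) (by norm_num)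
  refine h.congr (.of_forall fun p => ?_)
  simp only [Pi.add_apply]
  rw [Real.norm_of_nonneg (by positivity)]

theorem exists_correlated_step_le {α β s σ c C L : ℝ} (hα : 0 < α) (hα1 : α < 1) (hβ : 0 < β)
    (hβ1 : β < 1) (hs : s ^ 2 * (α * β) ≤ (1 - α) * (1 - β)) (hsσ : s ^ 2 + σ ^ 2 = 1)
    (hc : 0 < c) (hcC : c ≤ C) (hL : 0 ≤ L) :
    ∃ K, 0 ≤ K ∧ ∀ (F G : E → ℝ) (DF DG : E → E), HasControlledGradient c C L F DF →
      HasControlledGradient c C L G DG → ∀ ε, 0 ≤ ε → ∀ x y,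
      ∫ p : E × E, F (x + ε • (s • p.1 + σ • p.2)) ^ α * G (y + ε • p.1) ^ β
        ∂(stdGaussian E).prod (stdGaussian E) ≤
      gaussianAvg ε F x ^ α * gaussianAvg ε G y ^ β + K * ε ^ 3 := by
  set μ := (stdGaussian E).prod (stdGaussian E) with hμ
  obtain ⟨m, hm⟩ : ∃ m, m = (∫ z : E, ‖z‖ ∂stdGaussian E) + ∫ z : E, ‖z‖ ^ 2 ∂stdGaussian E :=
    ⟨_, rfl⟩
  have hm0 : 0 ≤ m := by
    rw [hm]
    exact add_nonneg (integral_nonneg fun _ => norm_nonneg _)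
      (integral_nonneg fun _ => by positivity)
  have hC : 0 < C := hc.trans_le hcC
  obtain ⟨K, hK, hexp⟩ := exists_rpow_mul_rpow_le hα hα1 hβ hβ1 (M := C / c)
    (A := L * (1 + m) / c) (by positivity) (by positivity)
  have hR3 : 0 ≤ ∫ p : E × E, (1 + ‖p.1‖ + ‖p.2‖) ^ 3 ∂μ := integral_nonneg fun _ => by positivity
  refine ⟨C ^ α * C ^ β * (K * ∫ p : E × E, (1 + ‖p.1‖ + ‖p.2‖) ^ 3 ∂μ), by positivity, ?_⟩
  intro F G DF DG hF hG ε hε x y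
  have hbound : ∀ {F DF} (hF : HasControlledGradient c C L F DF) (x : E),
      0 < gaussianAvg ε F x ∧ gaussianAvg ε F x ≤ C := fun hF x =>
    ⟨hc.trans_le ((hF.avg hc ε).lower x), (hF.avg hc ε).upper x⟩
  obtain ⟨hu, huC⟩ := hbound hF x
  obtain ⟨hv, hvC⟩ := hbound hG y
  set u := gaussianAvg ε F x with hudef
  set v := gaussianAvg ε G y with hvdef
  have hs1 : |s| ≤ 1 := abs_le_of_sq_le_sq (by nlinarith [sq_nonneg σ]) zero_le_one
  have hσ1 : |σ| ≤ 1 := abs_le_of_sq_le_sq (by nlinarith [sq_nonneg s]) zero_le_one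
  have mX : Measurable fun p : E × E => x + ε • (s • p.1 + σ • p.2) := by fun_prop
  have mY : Measurable fun p : E × E => y + ε • p.1 := by fun_prop
  have iF : Integrable (fun p : E × E => F (x + ε • (s • p.1 + σ • p.2))) μ :=
    .of_bound (hF.measurable.comp mX).aestronglyMeasurable C (.of_forall fun _ => hF.norm_le hc _)
  have iG : Integrable (fun p : E × E => G (y + ε • p.1)) μ :=
    .of_bound (hG.measurable.comp mY).aestronglyMeasurable C (.of_forall fun _ => hG.norm_le hc _)
  have eF : ∫ p, (F (x + ε • (s • p.1 + σ • p.2)) - u) / u ∂μ = 0 := by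
    rw [integral_div, integral_sub iF (integrable_const _),
      integral_correlated_fst hF.measurable (hF.norm_le hc) hsσ]
    simp [hudef]
  have eG : ∫ p, (G (y + ε • p.1) - v) / v ∂μ = 0 := by
    rw [integral_div, integral_sub iG (integrable_const _),
      integral_fun_fst (fun z => G (y + ε • z))]
    simp [hvdef, gaussianAvg]
  have iF' : Integrable (fun p : E × E => α * ((F (x + ε • (s • p.1 + σ • p.2)) - u) / u)) μ :=
    ((iF.sub (integrable_const u)).div_const u).const_mul α
  have iG' : Integrable (fun p : E × E => β * ((G (y + ε • p.1) - v) / v)) μ :=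
    ((iG.sub (integrable_const v)).div_const v).const_mul β
  obtain ⟨iQ, eQ⟩ := integral_correlated_quadratic (E := E) hsσ (α * (α - 1)) (2 * (α * β))
    (β * (β - 1)) (u⁻¹ • DF x) (v⁻¹ • DG y)
  have iQ' := iQ.const_mul (ε ^ 2 / 2)
  have iR := (integrable_cubic (E := E)).const_mul (K * ε ^ 3)
  have hpt : ∀ p : E × E, F (x + ε • (s • p.1 + σ • p.2)) ^ α * G (y + ε • p.1) ^ β ≤
      u ^ α * v ^ β * (1 + α * ((F (x + ε • (s • p.1 + σ • p.2)) - u) / u) +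
        β * ((G (y + ε • p.1) - v) / v) +
        ε ^ 2 / 2 * (α * (α - 1) * ⟪u⁻¹ • DF x, s • p.1 + σ • p.2⟫ ^ 2 +
          2 * (α * β) * (⟪u⁻¹ • DF x, s • p.1 + σ • p.2⟫ * ⟪v⁻¹ • DG y, p.1⟫) +
          β * (β - 1) * ⟪v⁻¹ • DG y, p.1⟫ ^ 2) +
        K * ε ^ 3 * (1 + ‖p.1‖ + ‖p.2‖) ^ 3) := by
    intro p
    have hR : 1 ≤ 1 + ‖p.1‖ + ‖p.2‖ := by linarith [norm_nonneg p.1, norm_nonneg p.2]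
    have hX : ‖s • p.1 + σ • p.2‖ ≤ 1 + ‖p.1‖ + ‖p.2‖ := by
      refine (norm_add_le _ _).trans ?_
      rw [norm_smul, norm_smul, Real.norm_eq_abs, Real.norm_eq_abs]
      nlinarith [norm_nonneg p.1, norm_nonneg p.2]
    obtain ⟨a1, a2, a3, a4, a5⟩ := hF.increment_bounds hc hL hε hR hm x hX
    obtain ⟨b1, b2, b3, b4, b5⟩ := hG.increment_bounds hc hL hε hR hm y (X := p.1)
      (by linarith [norm_nonneg p.2])
    have h := hexp _ _ _ _ _ (by positivity) a1 a2 b1 b2 a3 b3 a4 b4 a5 b5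
    rw [← hudef, ← hvdef] at h
    have r1 : F (x + ε • (s • p.1 + σ • p.2)) =
        u * (1 + (F (x + ε • (s • p.1 + σ • p.2)) - u) / u) := by field_simp; ring
    have r2 : G (y + ε • p.1) = v * (1 + (G (y + ε • p.1) - v) / v) := by field_simp; ring
    have l1 : F (x + ε • (s • p.1 + σ • p.2)) ^ α =
        u ^ α * (1 + (F (x + ε • (s • p.1 + σ • p.2)) - u) / u) ^ α := by
      rw [← Real.mul_rpow hu.le (by linarith), ← r1]
    have l2 : G (y + ε • p.1) ^ β = v ^ β * (1 + (G (y + ε • p.1) - v) / v) ^ β := by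
      rw [← Real.mul_rpow hv.le (by linarith), ← r2]
    rw [l1, l2, mul_mul_mul_comm]
    refine mul_le_mul_of_nonneg_left (h.trans (le_of_eq ?_)) (by positivity)
    ring
  have iRHS := ((((integrable_const (1 : ℝ)).add iF').add iG').add iQ').add iR
  have hle := integral_mono_of_nonneg (μ := μ) (.of_forall fun p => ?_)
    (iRHS.const_mul (u ^ α * v ^ β)) (.of_forall hpt)
  · refine hle.trans ?_
    rw [integral_const_mul,
      integral_add' ((((integrable_const (1 : ℝ)).add iF').add iG').add iQ') iR,
      integral_add' (((integrable_const (1 : ℝ)).add iF').add iG') iQ',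
      integral_add' ((integrable_const (1 : ℝ)).add iF') iG',
      integral_add' (integrable_const (1 : ℝ)) iF', integral_const_mul, integral_const_mul,
      integral_const_mul, integral_const_mul, eF, eG, eQ]
    have hq := correlated_quadratic_nonpos hα hα1 hβ hβ1 hs (u⁻¹ • DF x) (v⁻¹ • DG y)
    set q := α * (α - 1) * ‖u⁻¹ • DF x‖ ^ 2 +
      2 * (α * β) * (s * ⟪u⁻¹ • DF x, v⁻¹ • DG y⟫) + β * (β - 1) * ‖v⁻¹ • DG y‖ ^ 2
    set I := ∫ p : E × E, (1 + ‖p.1‖ + ‖p.2‖) ^ 3 ∂μ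
    have hq' : ε ^ 2 / 2 * q ≤ 0 := mul_nonpos_of_nonneg_of_nonpos (by positivity) hq
    have huv : u ^ α * v ^ β ≤ C ^ α * C ^ β := by gcongr
    have huv0 : 0 ≤ u ^ α * v ^ β := by positivity
    simp only [integral_const, probReal_univ, smul_eq_mul, mul_zero, mul_one, add_zero]
    calc u ^ α * v ^ β * (1 + ε ^ 2 / 2 * q + K * ε ^ 3 * I)
        ≤ u ^ α * v ^ β * (1 + 0 + K * ε ^ 3 * I) := by gcongr
      _ = u ^ α * v ^ β + u ^ α * v ^ β * (K * ε ^ 3 * I) := by ring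
      _ ≤ u ^ α * v ^ β + C ^ α * C ^ β * (K * ε ^ 3 * I) := by gcongr
      _ = _ := by ring
  · exact mul_nonneg (Real.rpow_nonneg (hc.le.trans (hF.lower _)) _)
      (Real.rpow_nonneg (hc.le.trans (hG.lower _)) _)

end TwoFunction

/-! ### Two-function hypercontractivity for smooth functions -/

section TwoFunctionSmooth

variable {E : Type*} [NormedAddCommGroup E] [InnerProductSpace ℝ E] [FiniteDimensional ℝ E]
  [MeasurableSpace E] [BorelSpace E]

lemma map_smul_add_smul_stdGaussian_prod_prod (r e : ℝ) :
    (((stdGaussian E).prod (stdGaussian E)).prod ((stdGaussian E).prod (stdGaussian E))).map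
      (fun p => r • p.1 + e • p.2) =
      ((stdGaussian E).prod (stdGaussian E)).map (fun x => √(r ^ 2 + e ^ 2) • x) := by
  have hm : Measurable fun p : (E × E) × (E × E) => r • p.1 + e • p.2 := by fun_prop
  have hm' : Measurable fun p : E × E => r • p.1 + e • p.2 := by fun_prop
  have : IsProbabilityMeasure ((((stdGaussian E).prod (stdGaussian E)).prod
      ((stdGaussian E).prod (stdGaussian E))).map (fun p => r • p.1 + e • p.2)) :=
    Measure.isProbabilityMeasure_map hm.aemeasurable
  have hfactor : ∀ S : Set E, MeasurableSet S →
      ∫⁻ x, stdGaussian E ((fun y => r • x + e • y) ⁻¹' S) ∂stdGaussian E =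
        stdGaussian E ((fun x => √(r ^ 2 + e ^ 2) • x) ⁻¹' S) := by
    intro S hS
    have h := DFunLike.congr_fun (map_smul_add_smul_stdGaussian_prod (E := E) r e) S
    rw [Measure.map_apply hm' hS, Measure.map_apply (by fun_prop) hS,
      Measure.prod_apply (hm' hS)] at h
    exact h
  have hmeas : ∀ S : Set E, MeasurableSet S →
      Measurable fun x => stdGaussian E ((fun y => r • x + e • y) ⁻¹' S) := fun S hS =>
    measurable_measure_prodMk_left (hm' hS)
  refine Measure.ext_prod fun {S T} hS hT => ?_
  rw [Measure.map_apply hm (hS.prod hT), Measure.map_apply (by fun_prop) (hS.prod hT),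
    Measure.prod_apply (hm (hS.prod hT))]
  have e1 : ∀ x : E × E, Prod.mk x ⁻¹' ((fun p : (E × E) × (E × E) => r • p.1 + e • p.2) ⁻¹' S ×ˢ T)
      = ((fun y => r • x.1 + e • y) ⁻¹' S) ×ˢ ((fun y => r • x.2 + e • y) ⁻¹' T) := fun _ => rfl
  have e2 : (fun x : E × E => √(r ^ 2 + e ^ 2) • x) ⁻¹' S ×ˢ T =
      ((fun x => √(r ^ 2 + e ^ 2) • x) ⁻¹' S) ×ˢ ((fun x => √(r ^ 2 + e ^ 2) • x) ⁻¹' T) := rfl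
  simp_rw [e1, Measure.prod_prod]
  rw [e2, Measure.prod_prod, ← hfactor S hS, ← hfactor T hT]
  exact lintegral_prod_mul (hmeas S hS).aemeasurable (hmeas T hT).aemeasurable

lemma integral_integral_smul_add_smul_prod {Φ : E × E → ℝ} (hΦ : Measurable Φ) {C : ℝ}
    (hC : ∀ p, |Φ p| ≤ C) (r e : ℝ) :
    ∫ p, ∫ q, Φ (r • p + e • q) ∂(stdGaussian E).prod (stdGaussian E)
      ∂(stdGaussian E).prod (stdGaussian E) =
    ∫ p, Φ (√(r ^ 2 + e ^ 2) • p) ∂(stdGaussian E).prod (stdGaussian E) := by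
  have hm : Measurable fun p : (E × E) × (E × E) => r • p.1 + e • p.2 := by fun_prop
  rw [← integral_prod (f := fun p : (E × E) × (E × E) => Φ (r • p.1 + e • p.2))
    (.of_bound (hΦ.comp hm).aestronglyMeasurable C (.of_forall fun _ => hC _)),
    ← integral_map hm.aemeasurable hΦ.aestronglyMeasurable,
    map_smul_add_smul_stdGaussian_prod_prod, integral_map (by fun_prop) hΦ.aestronglyMeasurable]

lemma gaussianAvg_gaussianAvg {F : E → ℝ} (hF : Measurable F) {C : ℝ} (hC : ∀ x, ‖F x‖ ≤ C)
    (r e : ℝ) (x : E) :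
    gaussianAvg r (gaussianAvg e F) x = gaussianAvg (√(r ^ 2 + e ^ 2)) F x := by
  simp only [gaussianAvg, add_assoc]
  exact integral_integral_smul_add_smul_stdGaussian (f := fun y => F (x + y))
    (hF.comp (by fun_prop)) (fun _ => hC _) r e

lemma correlated_step_iterate {α β s σ c C L K ε : ℝ} (hα : 0 ≤ α) (hβ : 0 ≤ β) (hc : 0 < c)
    (hstep : ∀ (F G : E → ℝ) (DF DG : E → E), HasControlledGradient c C L F DF →
      HasControlledGradient c C L G DG → ∀ x y,
      ∫ p : E × E, F (x + ε • (s • p.1 + σ • p.2)) ^ α * G (y + ε • p.1) ^ β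
        ∂(stdGaussian E).prod (stdGaussian E) ≤
      gaussianAvg ε F x ^ α * gaussianAvg ε G y ^ β + K) (hε : 0 ≤ ε) (k : ℕ) :
    ∀ (F G : E → ℝ) (DF DG : E → E), HasControlledGradient c C L F DF →
      HasControlledGradient c C L G DG → ∀ x y,
      ∫ p : E × E, F (x + (√k * ε) • (s • p.1 + σ • p.2)) ^ α * G (y + (√k * ε) • p.1) ^ β
        ∂(stdGaussian E).prod (stdGaussian E) ≤
      gaussianAvg (√k * ε) F x ^ α * gaussianAvg (√k * ε) G y ^ β + k * K := by
  induction k with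
  | zero => intro F G DF DG hF hG x y; simp [gaussianAvg]
  | succ k ih =>
    intro F G DF DG hF hG x y
    set μ := (stdGaussian E).prod (stdGaussian E)
    have hR : √((k + 1 : ℕ) : ℝ) * ε = √((√k * ε) ^ 2 + ε ^ 2) := by
      rw [mul_pow, Real.sq_sqrt (by positivity), ← add_one_mul, Real.sqrt_mul (by positivity),
        Real.sqrt_sq hε]
      push_cast
      rfl
    have hprod : ∀ {F G : E → ℝ} {DF DG : E → E}, HasControlledGradient c C L F DF →
        HasControlledGradient c C L G DG → ∀ a b,
        |F a ^ α * G b ^ β| ≤ C ^ α * C ^ β := by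
      intro F G DF DG hF hG a b
      have h1 : 0 < F a := hc.trans_le (hF.lower a)
      have h2 : 0 < G b := hc.trans_le (hG.lower b)
      have h3 := hF.upper a
      have h4 := hG.upper b
      have h5 : 0 < C := h1.trans_le h3
      rw [abs_of_nonneg (by positivity)]
      gcongr
    have hmeas : ∀ {F G : E → ℝ} {DF DG : E → E}, HasControlledGradient c C L F DF →
        HasControlledGradient c C L G DG → ∀ r : ℝ, Measurable fun p : E × E =>
          F (x + r • (s • p.1 + σ • p.2)) ^ α * G (y + r • p.1) ^ β := by
      intro F G DF DG hF hG r
      exact ((hF.measurable.comp (by fun_prop :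
        Measurable fun p : E × E => x + r • (s • p.1 + σ • p.2))).pow_const α).mul
        ((hG.measurable.comp (by fun_prop : Measurable fun p : E × E => y + r • p.1)).pow_const β)
    have hFa := hF.avg hc ε
    have hGa := hG.avg hc ε
    set r := √k * ε
    have hrot := integral_integral_smul_add_smul_prod
      (Φ := fun p : E × E => F (x + (s • p.1 + σ • p.2)) ^ α * G (y + p.1) ^ β)
      (by simpa using hmeas hF hG 1) (fun p => hprod hF hG _ _) r ε
    have hinteg : Integrable (fun p : E × E => gaussianAvg ε F (x + r • (s • p.1 + σ • p.2)) ^ α *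
        gaussianAvg ε G (y + r • p.1) ^ β) μ :=
      .of_bound (hmeas hFa hGa r).aestronglyMeasurable _ (.of_forall fun p => hprod hFa hGa _ _)
    rw [hR]
    calc ∫ p : E × E, F (x + √(r ^ 2 + ε ^ 2) • (s • p.1 + σ • p.2)) ^ α *
          G (y + √(r ^ 2 + ε ^ 2) • p.1) ^ β ∂μ
        = ∫ p : E × E, ∫ q : E × E, F (x + r • (s • p.1 + σ • p.2) + ε • (s • q.1 + σ • q.2)) ^ α *
          G (y + r • p.1 + ε • q.1) ^ β ∂μ ∂μ := by
          refine Eq.trans ?_ (hrot.symm.trans ?_)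
          · refine integral_congr_ae (.of_forall fun p => ?_)
            simp only [Prod.smul_fst, Prod.smul_snd, smul_add, smul_comm s, smul_comm σ]
          · refine integral_congr_ae (.of_forall fun p =>
              integral_congr_ae (.of_forall fun q => ?_))
            simp only [Prod.smul_fst, Prod.smul_snd, Prod.fst_add, Prod.snd_add, smul_add,
              smul_comm s, smul_comm σ]
            congr 3 <;> abel
      _ ≤ ∫ p : E × E, (gaussianAvg ε F (x + r • (s • p.1 + σ • p.2)) ^ α *
          gaussianAvg ε G (y + r • p.1) ^ β + K) ∂μ := by
          refine integral_mono_of_nonneg (.of_forall fun p => integral_nonneg fun q => ?_)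
            (hinteg.add (integrable_const K)) (.of_forall fun p => hstep F G DF DG hF hG _ _)
          exact mul_nonneg (Real.rpow_nonneg (hc.le.trans (hF.lower _)) _)
            (Real.rpow_nonneg (hc.le.trans (hG.lower _)) _)
      _ = ∫ p : E × E, gaussianAvg ε F (x + r • (s • p.1 + σ • p.2)) ^ α *
          gaussianAvg ε G (y + r • p.1) ^ β ∂μ + K := by
          rw [integral_add hinteg (integrable_const K)]; simp
      _ ≤ gaussianAvg r (gaussianAvg ε F) x ^ α * gaussianAvg r (gaussianAvg ε G) y ^ β +
          k * K + K := by
          gcongr; exact ih _ _ _ _ hFa hGa x y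
      _ = _ := by
          rw [gaussianAvg_gaussianAvg hF.measurable (hF.norm_le hc),
            gaussianAvg_gaussianAvg hG.measurable (hG.norm_le hc)]
          push_cast; ring

lemma integral_rpow_mul_rpow_le_of_hasControlledGradient {α β s σ c C L : ℝ} (hα : 0 < α)
    (hα1 : α < 1) (hβ : 0 < β) (hβ1 : β < 1) (hs : s ^ 2 * (α * β) ≤ (1 - α) * (1 - β))
    (hsσ : s ^ 2 + σ ^ 2 = 1) (hc : 0 < c) {F G : E → ℝ} {DF DG : E → E}
    (hF : HasControlledGradient c C L F DF) (hG : HasControlledGradient c C L G DG) :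
    ∫ p : E × E, F (s • p.1 + σ • p.2) ^ α * G p.1 ^ β ∂(stdGaussian E).prod (stdGaussian E) ≤
      (∫ z, F z ∂stdGaussian E) ^ α * (∫ z, G z ∂stdGaussian E) ^ β := by
  obtain ⟨K, hK, hstep⟩ := exists_correlated_step_le (E := E) hα hα1 hβ hβ1 hs hsσ hc
    ((hF.lower 0).trans (hF.upper 0)) ((norm_nonneg _).trans (hF.norm_grad_le 0))
  have hbd : ∀ N : ℕ, ∫ p : E × E, F (s • p.1 + σ • p.2) ^ α * G p.1 ^ β
      ∂(stdGaussian E).prod (stdGaussian E) ≤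
      (∫ z, F z ∂stdGaussian E) ^ α * (∫ z, G z ∂stdGaussian E) ^ β +
        K * (√((N : ℝ) + 1))⁻¹ := by
    intro N
    have hN : 0 < √((N : ℝ) + 1) := Real.sqrt_pos.2 (by positivity)
    have h := correlated_step_iterate hα.le hβ.le hc (ε := (√((N : ℝ) + 1))⁻¹)
      (fun F G DF DG hF hG x y => hstep F G DF DG hF hG _ (by positivity) x y) (by positivity)
      (N + 1) F G DF DG hF hG 0 0
    push_cast at h
    simp only [mul_inv_cancel₀ hN.ne', gaussianAvg, zero_add, one_smul] at h
    refine h.trans_eq ?_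
    congr 1
    have : (N : ℝ) + 1 = √((N : ℝ) + 1) ^ 2 := (Real.sq_sqrt (by positivity)).symm
    nth_rewrite 1 [this]
    field_simp
  refine ge_of_tendsto (x := atTop) (f := fun N : ℕ =>
    (∫ z, F z ∂stdGaussian E) ^ α * (∫ z, G z ∂stdGaussian E) ^ β + K * (√((N : ℝ) + 1))⁻¹)
    ?_ (.of_forall hbd)
  have : Tendsto (fun N : ℕ => (√((N : ℝ) + 1))⁻¹) atTop (𝓝 0) :=
    tendsto_inv_atTop_zero.comp (Real.tendsto_sqrt_atTop.comp
      (tendsto_atTop_add_const_right _ _ tendsto_natCast_atTop_atTop))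
  simpa using (this.const_mul K).const_add
    ((∫ z, F z ∂stdGaussian E) ^ α * (∫ z, G z ∂stdGaussian E) ^ β)

end TwoFunctionSmooth

/-! ### Mollification -/

section Mollify

open scoped Convolution
open ContinuousLinearMap (lsmul)

variable {E : Type*} [NormedAddCommGroup E] [InnerProductSpace ℝ E] [FiniteDimensional ℝ E]
  [MeasurableSpace E] [BorelSpace E]

lemma HasControlledGradient.mono {E : Type*} [NormedAddCommGroup E]
    [InnerProductSpace ℝ E] [MeasurableSpace E] {c C L L' : ℝ} {F : E → ℝ} {D : E → E}
    (h : HasControlledGradient c C L F D) (hL : L ≤ L') : HasControlledGradient c C L' F D where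
  measurable := h.measurable
  measurable_grad := h.measurable_grad
  lower := h.lower
  upper := h.upper
  norm_grad_le x := (h.norm_grad_le x).trans hL
  lipschitz x v := (h.lipschitz x v).trans (by gcongr)
  taylor x v := (h.taylor x v).trans (by gcongr)

lemma hasControlledGradient_of_hasFDerivAt {c C L : ℝ} {F : E → ℝ} {F' : E → E →L[ℝ] ℝ}
    {F'' : E → E →L[ℝ] E →L[ℝ] ℝ} (h1 : ∀ x, HasFDerivAt F (F' x) x)
    (h2 : ∀ x, HasFDerivAt F' (F'' x) x) (hlower : ∀ x, c ≤ F x) (hupper : ∀ x, F x ≤ C)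
    (hL1 : ∀ x, ‖F' x‖ ≤ L) (hL2 : ∀ x, ‖F'' x‖ ≤ L) :
    HasControlledGradient c C L F (fun x => (InnerProductSpace.toDual ℝ E).symm (F' x)) where
  measurable := (continuous_iff_continuousAt.2 fun x => (h1 x).continuousAt).measurable
  measurable_grad := by
    have : Continuous F' := continuous_iff_continuousAt.2 fun x => (h2 x).continuousAt
    exact ((InnerProductSpace.toDual ℝ E).symm.continuous.comp this).measurable
  lower := hlower
  upper := hupper
  norm_grad_le x := by simpa using hL1 x
  lipschitz x v := by
    simpa using convex_univ.norm_image_sub_le_of_norm_hasFDerivWithin_le (x := x) (y := x + v)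
      (fun y _ => (h1 y).hasFDerivWithinAt) (fun y _ => hL1 y) trivial trivial
  taylor x v := by
    have hL : 0 ≤ L := (norm_nonneg _).trans (hL1 x)
    have hlip : ∀ y, ‖F' y - F' x‖ ≤ L * ‖y - x‖ := fun y =>
      convex_univ.norm_image_sub_le_of_norm_hasFDerivWithin_le
        (fun y _ => (h2 y).hasFDerivWithinAt) (fun y _ => hL2 y) trivial trivial
    have h := (convex_closedBall x ‖v‖).norm_image_sub_le_of_norm_hasFDerivWithin_le'
      (x := x) (y := x + v) (C := L * ‖v‖)
      (fun y _ => (h1 y).hasFDerivWithinAt) (φ := F' x)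
      (fun y hy => (hlip y).trans (by
        gcongr
        simpa [dist_eq_norm] using hy)) (by simp) (by simp)
    simpa [pow_two, mul_assoc] using h

lemma norm_convolution_le {V W : Type*} [NormedAddCommGroup V] [NormedSpace ℝ V]
    [NormedAddCommGroup W] [NormedSpace ℝ W] (B : V →L[ℝ] ℝ →L[ℝ] W) {g : E → V}
    (hg : Integrable g) {F : E → ℝ} {C : ℝ} (hC : ∀ x, ‖F x‖ ≤ C) (x : E) :
    ‖(g ⋆[B, volume] F) x‖ ≤ ‖B‖ * C * ∫ y, ‖g y‖ := by
  rw [convolution_def, ← integral_const_mul]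
  refine norm_integral_le_of_norm_le (hg.norm.const_mul _) (.of_forall fun y => ?_)
  calc ‖B (g y) (F (x - y))‖ ≤ ‖B‖ * ‖g y‖ * ‖F (x - y)‖ := B.le_opNorm₂ _ _
    _ ≤ ‖B‖ * ‖g y‖ * C := by gcongr; exact hC _
    _ = _ := by ring

lemma locallyIntegrable_of_norm_le {F : E → ℝ} (hF : Measurable F) {C : ℝ}
    (hC : ∀ x, ‖F x‖ ≤ C) : LocallyIntegrable F := by
  refine (locallyIntegrable_const C).mono hF.aestronglyMeasurable (.of_forall fun x => ?_)
  exact (hC x).trans (Real.le_norm_self C)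

set_option maxSynthPendingDepth 2 in
lemma exists_hasControlledGradient_convolution {ψ : E → ℝ} (hψ : ContDiff ℝ 2 ψ)
    (hψc : HasCompactSupport ψ) (hψ0 : ∀ x, 0 ≤ ψ x) (hψ1 : ∫ x, ψ x = 1) {F : E → ℝ}
    (hF : Measurable F) {c C : ℝ} (hc : 0 < c) (hlower : ∀ x, c ≤ F x) (hupper : ∀ x, F x ≤ C) :
    ∃ L D, HasControlledGradient c C L (ψ ⋆[lsmul ℝ ℝ, volume] F) D := by
  have hC : ∀ x, ‖F x‖ ≤ C := fun x => by
    rw [Real.norm_of_nonneg (hc.le.trans (hlower x))]; exact hupper x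
  have hFi : LocallyIntegrable F := locallyIntegrable_of_norm_le hF hC
  have hψ' : ContDiff ℝ 1 (fderiv ℝ ψ) := hψ.fderiv_right (by norm_num)
  have i0 : Integrable ψ := hψ.continuous.integrable_of_hasCompactSupport hψc
  have i1 : Integrable (fderiv ℝ ψ) :=
    hψ'.continuous.integrable_of_hasCompactSupport (hψc.fderiv ℝ)
  have i2 : Integrable (fderiv ℝ (fderiv ℝ ψ)) :=
    (hψ'.continuous_fderiv (by norm_num)).integrable_of_hasCompactSupport
      ((hψc.fderiv ℝ).fderiv ℝ)
  have hprod : ∀ x, Integrable fun t => ψ t * F (x - t) := fun x =>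
    hψc.convolutionExists_left (lsmul ℝ ℝ) hψ.continuous hFi x
  have b1 := norm_convolution_le ((lsmul ℝ ℝ : ℝ →L[ℝ] ℝ →L[ℝ] ℝ).precompL E) i1 hC
  have b2 := norm_convolution_le (((lsmul ℝ ℝ : ℝ →L[ℝ] ℝ →L[ℝ] ℝ).precompL E).precompL E) i2 hC
  refine ⟨_, _, hasControlledGradient_of_hasFDerivAt
    (fun x => hψc.hasFDerivAt_convolution_left (lsmul ℝ ℝ) (hψ.of_le (by norm_num)) hFi x)
    (fun x => (hψc.fderiv ℝ).hasFDerivAt_convolution_left _ hψ' hFi x) ?_ ?_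
    (fun x => (b1 x).trans (le_max_left _ _)) (fun x => (b2 x).trans (le_max_right _ _))⟩
  · intro x
    rw [convolution_def]
    calc c = ∫ t, ψ t * c := by rw [integral_mul_const, hψ1, one_mul]
      _ ≤ ∫ t, ψ t * F (x - t) := integral_mono (i0.mul_const c) (hprod x) fun t =>
        mul_le_mul_of_nonneg_left (hlower _) (hψ0 t)
  · intro x
    rw [convolution_def]
    calc ∫ t, ψ t * F (x - t) ≤ ∫ t, ψ t * C := integral_mono (hprod x) (i0.mul_const C) fun t =>
        mul_le_mul_of_nonneg_left (hupper _) (hψ0 t)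
      _ = C := by rw [integral_mul_const, hψ1, one_mul]

/-- A bounded measurable function is an almost everywhere limit of functions with controlled
gradients and the same bounds. -/
lemma exists_hasControlledGradient_tendsto {F : E → ℝ} (hF : Measurable F) {c C : ℝ} (hc : 0 < c)
    (hlower : ∀ x, c ≤ F x) (hupper : ∀ x, F x ≤ C) :
    ∃ (Fk : ℕ → E → ℝ) (L : ℕ → ℝ) (D : ℕ → E → E),
      (∀ k, HasControlledGradient c C (L k) (Fk k) (D k)) ∧
      ∀ᵐ x, Tendsto (fun k => Fk k x) atTop (𝓝 (F x)) := by
  have hC : ∀ x, ‖F x‖ ≤ C := fun x => by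
    rw [Real.norm_of_nonneg (hc.le.trans (hlower x))]; exact hupper x
  let φ : ℕ → ContDiffBump (0 : E) := fun k =>
    { rIn := 1 / ((k : ℝ) + 1)
      rOut := 2 * (1 / ((k : ℝ) + 1))
      rIn_pos := by positivity
      rIn_lt_rOut := by
        have : 0 < 1 / ((k : ℝ) + 1) := by positivity
        linarith }
  have h : ∀ k, ∃ L D, HasControlledGradient c C L ((φ k).normed volume ⋆[lsmul ℝ ℝ, volume] F) D :=
    fun k => exists_hasControlledGradient_convolution ((φ k).contDiff_normed (n := 2))
      (φ k).hasCompactSupport_normed (φ k).nonneg_normed (φ k).integral_normed hF hc hlower hupper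
  choose L D hD using h
  refine ⟨_, L, D, hD, ContDiffBump.ae_convolution_tendsto_right_of_locallyIntegrable (K := 2)
    ?_ (.of_forall fun k => le_rfl) (locallyIntegrable_of_norm_le hF hC)⟩
  simpa only [φ, mul_zero] using tendsto_one_div_add_atTop_nhds_zero_nat.const_mul (2 : ℝ)

end Mollify

/-! ### Two-function hypercontractivity -/

section TwoFunctionGeneral

variable {n : ℕ}

local notation "𝔼" => EuclideanSpace ℝ (Fin n)

lemma stdGaussian_absolutelyContinuous : stdGaussian 𝔼 ≪ volume := by
  rw [← gaussianMeasure_eq_stdGaussian]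
  exact withDensity_absolutelyContinuous _ _

lemma map_correlated_stdGaussian {s σ : ℝ} (hsσ : s ^ 2 + σ ^ 2 = 1) :
    ((stdGaussian 𝔼).prod (stdGaussian 𝔼)).map (fun p => s • p.1 + σ • p.2) = stdGaussian 𝔼 := by
  rw [map_smul_add_smul_stdGaussian_prod, hsσ, Real.sqrt_one]
  simp

lemma integral_rpow_mul_rpow_le_of_bounded {α β s σ c C : ℝ} (hα : 0 < α)
    (hα1 : α < 1) (hβ : 0 < β) (hβ1 : β < 1) (hs : s ^ 2 * (α * β) ≤ (1 - α) * (1 - β))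
    (hsσ : s ^ 2 + σ ^ 2 = 1) (hc : 0 < c) {F G : 𝔼 → ℝ} (hF : Measurable F) (hG : Measurable G)
    (hFc : ∀ x, c ≤ F x) (hFC : ∀ x, F x ≤ C) (hGc : ∀ x, c ≤ G x) (hGC : ∀ x, G x ≤ C) :
    ∫ p : 𝔼 × 𝔼, F (s • p.1 + σ • p.2) ^ α * G p.1 ^ β ∂(stdGaussian 𝔼).prod (stdGaussian 𝔼) ≤
      (∫ z, F z ∂stdGaussian 𝔼) ^ α * (∫ z, G z ∂stdGaussian 𝔼) ^ β := by
  obtain ⟨Fk, LF, DF, hFk, hFlim⟩ := exists_hasControlledGradient_tendsto hF hc hFc hFC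
  obtain ⟨Gk, LG, DG, hGk, hGlim⟩ := exists_hasControlledGradient_tendsto hG hc hGc hGC
  have hmap : Measurable fun p : 𝔼 × 𝔼 => s • p.1 + σ • p.2 := by fun_prop
  replace hFlim := stdGaussian_absolutelyContinuous.ae_le hFlim
  replace hGlim := stdGaussian_absolutelyContinuous.ae_le hGlim
  have hFlim' : ∀ᵐ p ∂(stdGaussian 𝔼).prod (stdGaussian 𝔼),
      Tendsto (fun k => Fk k (s • p.1 + σ • p.2)) atTop (𝓝 (F (s • p.1 + σ • p.2))) :=
    ae_of_ae_map (p := fun z => Tendsto (fun k => Fk k z) atTop (𝓝 (F z))) hmap.aemeasurable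
      (by rwa [map_correlated_stdGaussian hsσ])
  have hGlim' : ∀ᵐ p ∂(stdGaussian 𝔼).prod (stdGaussian 𝔼),
      Tendsto (fun k => Gk k p.1) atTop (𝓝 (G p.1)) :=
    (Measure.quasiMeasurePreserving_fst (μ := stdGaussian 𝔼) (ν := stdGaussian 𝔼)).ae hGlim
  have lim : ∀ {H : 𝔼 → ℝ} {Hk : ℕ → 𝔼 → ℝ} {L : ℕ → ℝ} {D : ℕ → 𝔼 → 𝔼},
      (∀ k, HasControlledGradient c C (L k) (Hk k) (D k)) →
      (∀ᵐ x ∂stdGaussian 𝔼, Tendsto (fun k => Hk k x) atTop (𝓝 (H x))) →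
      Tendsto (fun k => ∫ z, Hk k z ∂stdGaussian 𝔼) atTop (𝓝 (∫ z, H z ∂stdGaussian 𝔼)) :=
    fun hk hlim => tendsto_integral_of_dominated_convergence (fun _ => C)
      (fun k => (hk k).measurable.aestronglyMeasurable) (integrable_const C)
      (fun k => .of_forall fun x => (hk k).norm_le hc x) hlim
  refine le_of_tendsto_of_tendsto' (tendsto_integral_of_dominated_convergence
      (F := fun k (p : 𝔼 × 𝔼) => Fk k (s • p.1 + σ • p.2) ^ α * Gk k p.1 ^ β)
      (fun _ => C ^ α * C ^ β) (fun k => ?_) (integrable_const _)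
      (fun k => .of_forall fun p => ?_) ?_)
    (((lim hFk hFlim).rpow_const (.inr hα.le)).mul ((lim hGk hGlim).rpow_const (.inr hβ.le)))
    fun k => integral_rpow_mul_rpow_le_of_hasControlledGradient hα hα1 hβ hβ1 hs hsσ hc
      ((hFk k).mono (le_max_left _ _)) ((hGk k).mono (le_max_right _ _))
  · exact ((((hFk k).measurable.comp hmap).pow_const α).mul
      (((hGk k).measurable.comp measurable_fst).pow_const β)).aestronglyMeasurable
  · have h1 : 0 < Fk k (s • p.1 + σ • p.2) := hc.trans_le ((hFk k).lower _)
    have h2 : 0 < Gk k p.1 := hc.trans_le ((hGk k).lower _)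
    have h3 := (hFk k).upper (s • p.1 + σ • p.2)
    have h4 := (hGk k).upper p.1
    have h5 : 0 < C := h1.trans_le h3
    rw [Real.norm_of_nonneg (by positivity)]
    gcongr
  · filter_upwards [hFlim', hGlim'] with p h1 h2
    exact (h1.rpow_const (.inr hα.le)).mul (h2.rpow_const (.inr hβ.le))

/-- Two-function form of Gaussian hypercontractivity. -/
theorem lintegral_rpow_mul_rpow_le {α β s σ : ℝ} (hα : 0 < α)
    (hα1 : α < 1) (hβ : 0 < β) (hβ1 : β < 1) (hs : s ^ 2 * (α * β) ≤ (1 - α) * (1 - β))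
    (hsσ : s ^ 2 + σ ^ 2 = 1) {F G : 𝔼 → ℝ} (hF : Measurable F) (hG : Measurable G)
    (hF0 : ∀ x, 0 ≤ F x) (hG0 : ∀ x, 0 ≤ G x) (hFi : Integrable F (stdGaussian 𝔼))
    (hGi : Integrable G (stdGaussian 𝔼)) :
    ∫⁻ p : 𝔼 × 𝔼, ENNReal.ofReal (F (s • p.1 + σ • p.2) ^ α * G p.1 ^ β)
      ∂(stdGaussian 𝔼).prod (stdGaussian 𝔼) ≤
      ENNReal.ofReal ((∫ z, F z ∂stdGaussian 𝔼) ^ α * (∫ z, G z ∂stdGaussian 𝔼) ^ β) := by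
  have hmap : Measurable fun p : 𝔼 × 𝔼 => s • p.1 + σ • p.2 := by fun_prop
  let T : ℕ → ℝ → ℝ := fun k y => min y k + 1 / ((k : ℝ) + 1)
  have hδ : Tendsto (fun k : ℕ => 1 / ((k : ℝ) + 1)) atTop (𝓝 0) :=
    tendsto_one_div_add_atTop_nhds_zero_nat
  have hTm : ∀ k, Measurable (T k) := fun k => by fun_prop
  have hTc : ∀ (k : ℕ) (y : ℝ), 0 ≤ y → 1 / ((k : ℝ) + 1) ≤ T k y := fun k y hy =>
    le_add_of_nonneg_left (le_min hy (Nat.cast_nonneg k))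
  have hTC : ∀ (k : ℕ) (y : ℝ), T k y ≤ k + 1 / ((k : ℝ) + 1) := fun k y => by
    simp only [T]; gcongr; exact min_le_right _ _
  have hTpos : ∀ k y, 0 ≤ y → 0 ≤ T k y := fun k y hy => le_trans (by positivity) (hTc k y hy)
  have hTlim : ∀ y, Tendsto (fun k => T k y) atTop (𝓝 y) := fun y => by
    have h1 : Tendsto (fun k : ℕ => min y (k : ℝ)) atTop (𝓝 y) := by
      refine tendsto_const_nhds.congr' ?_
      filter_upwards [eventually_ge_atTop ⌈y⌉₊] with k hk
      rw [min_eq_left (Nat.ceil_le.1 hk)]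
    simpa only [T, add_zero] using h1.add hδ
  have hinteg : ∀ {H : 𝔼 → ℝ}, Measurable H → (∀ x, 0 ≤ H x) → Integrable H (stdGaussian 𝔼) → ∀ k,
      0 ≤ ∫ z, T k (H z) ∂stdGaussian 𝔼 ∧
      ∫ z, T k (H z) ∂stdGaussian 𝔼 ≤ ∫ z, H z ∂stdGaussian 𝔼 + 1 / ((k : ℝ) + 1) := by
    intro H hH hH0 hHi k
    refine ⟨integral_nonneg fun z => hTpos k _ (hH0 z), ?_⟩
    have e : ∫ z, H z ∂stdGaussian 𝔼 + 1 / ((k : ℝ) + 1) =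
        ∫ z, (H z + 1 / ((k : ℝ) + 1)) ∂stdGaussian 𝔼 := by
      rw [integral_add hHi (integrable_const _)]; simp
    rw [e]
    refine integral_mono_of_nonneg (.of_forall fun z => hTpos k _ (hH0 z))
      (hHi.add (integrable_const _)) (.of_forall fun z => ?_)
    simp only [T]
    gcongr
    exact min_le_left _ _
  have hk : ∀ k, ∫⁻ p : 𝔼 × 𝔼, ENNReal.ofReal
      (T k (F (s • p.1 + σ • p.2)) ^ α * T k (G p.1) ^ β)
      ∂(stdGaussian 𝔼).prod (stdGaussian 𝔼) ≤
      ENNReal.ofReal ((∫ z, F z ∂stdGaussian 𝔼 + 1 / ((k : ℝ) + 1)) ^ α *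
        (∫ z, G z ∂stdGaussian 𝔼 + 1 / ((k : ℝ) + 1)) ^ β) := by
    intro k
    have hb : ∀ p : 𝔼 × 𝔼, 0 ≤ T k (F (s • p.1 + σ • p.2)) ^ α * T k (G p.1) ^ β := fun p =>
      mul_nonneg (Real.rpow_nonneg (hTpos _ _ (hF0 _)) _) (Real.rpow_nonneg (hTpos _ _ (hG0 _)) _)
    have hm : Measurable fun p : 𝔼 × 𝔼 => T k (F (s • p.1 + σ • p.2)) ^ α * T k (G p.1) ^ β :=
      (((hTm k).comp (hF.comp hmap)).pow_const α).mul
        (((hTm k).comp (hG.comp measurable_fst)).pow_const β)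
    rw [← ofReal_integral_eq_lintegral_ofReal (.of_bound hm.aestronglyMeasurable
      ((k + 1 / ((k : ℝ) + 1)) ^ α * (k + 1 / ((k : ℝ) + 1)) ^ β) (.of_forall fun p => ?_))
      (.of_forall hb)]
    · refine ENNReal.ofReal_le_ofReal ?_
      refine (integral_rpow_mul_rpow_le_of_bounded hα hα1 hβ hβ1 hs hsσ
        (c := 1 / ((k : ℝ) + 1)) (by positivity)
        ((hTm k).comp hF) ((hTm k).comp hG) (fun x => hTc k _ (hF0 x)) (fun x => hTC k _)
        (fun x => hTc k _ (hG0 x)) (fun x => hTC k _)).trans ?_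
      obtain ⟨f0, f1⟩ := hinteg hF hF0 hFi k
      obtain ⟨g0, g1⟩ := hinteg hG hG0 hGi k
      simp only [Function.comp_apply]
      gcongr
      exact Real.rpow_nonneg (f0.trans f1) _
    · rw [Real.norm_of_nonneg (hb p)]
      have h1 := hTpos k _ (hF0 (s • p.1 + σ • p.2))
      have h2 := hTpos k _ (hG0 p.1)
      have h3 := hTC k (F (s • p.1 + σ • p.2))
      have h4 := hTC k (G p.1)
      gcongr
  have hlim : Tendsto (fun k : ℕ => ENNReal.ofReal
      ((∫ z, F z ∂stdGaussian 𝔼 + 1 / ((k : ℝ) + 1)) ^ α *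
        (∫ z, G z ∂stdGaussian 𝔼 + 1 / ((k : ℝ) + 1)) ^ β)) atTop
      (𝓝 (ENNReal.ofReal ((∫ z, F z ∂stdGaussian 𝔼) ^ α * (∫ z, G z ∂stdGaussian 𝔼) ^ β))) := by
    refine ENNReal.tendsto_ofReal (Tendsto.mul ?_ ?_)
    · simpa using (hδ.const_add (∫ z, F z ∂stdGaussian 𝔼)).rpow_const (.inr hα.le)
    · simpa using (hδ.const_add (∫ z, G z ∂stdGaussian 𝔼)).rpow_const (.inr hβ.le)
  calc _ = ∫⁻ p : 𝔼 × 𝔼, liminf (fun k => ENNReal.ofReal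
      (T k (F (s • p.1 + σ • p.2)) ^ α * T k (G p.1) ^ β)) atTop
      ∂(stdGaussian 𝔼).prod (stdGaussian 𝔼) := by
        refine lintegral_congr fun p => (Tendsto.liminf_eq ?_).symm
        exact ENNReal.tendsto_ofReal (((hTlim _).rpow_const (.inr hα.le)).mul
          ((hTlim _).rpow_const (.inr hβ.le)))
    _ ≤ liminf (fun k => ∫⁻ p : 𝔼 × 𝔼, ENNReal.ofReal
      (T k (F (s • p.1 + σ • p.2)) ^ α * T k (G p.1) ^ β)
      ∂(stdGaussian 𝔼).prod (stdGaussian 𝔼)) atTop := by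
        refine lintegral_liminf_le fun k => ENNReal.measurable_ofReal.comp ?_
        exact (((hTm k).comp (hF.comp hmap)).pow_const α).mul
          (((hTm k).comp (hG.comp measurable_fst)).pow_const β)
    _ ≤ _ := (liminf_le_liminf (.of_forall hk)).trans_eq hlim.liminf_eq

end TwoFunctionGeneral

/-! ### Change of variables -/

section ChangeOfVariables

variable {n : ℕ}

local notation "𝔼" => EuclideanSpace ℝ (Fin n)

lemma integral_stdGaussian_eq (g : 𝔼 → ℝ) :
    ∫ x, g x ∂stdGaussian 𝔼 =
      (2 * π) ^ (-(n : ℝ) / 2) * ∫ x, g x * Real.exp (-‖x‖ ^ 2 / 2) := by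
  rw [← gaussianMeasure_eq_stdGaussian, gaussianMeasure,
    integral_withDensity_eq_integral_toReal_smul (by fun_prop) (by simp), ← integral_const_mul]
  refine integral_congr_ae (.of_forall fun x => ?_)
  simp only
  rw [ENNReal.toReal_ofReal (by positivity), smul_eq_mul]
  ring

lemma integral_smul_add_smul_stdGaussian (g : 𝔼 → ℝ) (r : ℝ) {b l : ℝ} (hb : 0 < b) (hl : 0 < l)
    (x : 𝔼) :
    ∫ y, g (r • x + b • y) ∂stdGaussian 𝔼 = (2 * π) ^ (-(n : ℝ) / 2) * (l / b) ^ n *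
      ∫ v, g (l • v) * Real.exp (-‖l • v - r • x‖ ^ 2 / (2 * b ^ 2)) := by
  have h1 : ∫ y, g (r • x + b • y) * Real.exp (-‖y‖ ^ 2 / 2) =
      (b ^ n)⁻¹ * ∫ u, g u * Real.exp (-‖u - r • x‖ ^ 2 / (2 * b ^ 2)) := by
    have h := Measure.integral_comp_smul_of_nonneg volume
      (fun u : 𝔼 => g (r • x + u) * Real.exp (-‖u‖ ^ 2 / (2 * b ^ 2))) b (hR := hb.le)
    rw [finrank_euclideanSpace_fin, smul_eq_mul] at h
    rw [← integral_add_left_eq_self (fun u : 𝔼 => g u * Real.exp (-‖u - r • x‖ ^ 2 / (2 * b ^ 2)))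
      (r • x)]
    simp only [add_sub_cancel_left]
    rw [← h]
    refine integral_congr_ae (.of_forall fun y => ?_)
    simp only [norm_smul, Real.norm_of_nonneg hb.le]
    congr 2
    field_simp
  have h2 := Measure.integral_comp_smul_of_nonneg volume
    (fun u : 𝔼 => g u * Real.exp (-‖u - r • x‖ ^ 2 / (2 * b ^ 2))) l (hR := hl.le)
  rw [finrank_euclideanSpace_fin, smul_eq_mul] at h2
  rw [integral_stdGaussian_eq, h1, h2, div_pow]
  field_simp

lemma integral_smul_mul_exp_stdGaussian (g : 𝔼 → ℝ) {κ l : ℝ} (hκ : 0 < κ) (hl : 0 < l) :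
    ∫ v, g (l • v) * Real.exp (-(κ ^ 2 * l ^ 2 - 1) * ‖v‖ ^ 2 / 2) ∂stdGaussian 𝔼 =
      ((κ * l) ^ n)⁻¹ * ∫ x, g (κ⁻¹ • x) ∂stdGaussian 𝔼 := by
  have h := Measure.integral_comp_smul_of_nonneg volume
    (fun u : 𝔼 => g (κ⁻¹ • u) * Real.exp (-‖u‖ ^ 2 / 2)) (κ * l) (hR := (mul_pos hκ hl).le)
  rw [finrank_euclideanSpace_fin, smul_eq_mul] at h
  rw [integral_stdGaussian_eq, integral_stdGaussian_eq, mul_left_comm, ← h]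
  congr 1
  refine integral_congr_ae (.of_forall fun v => ?_)
  simp only [smul_smul, norm_smul, inv_mul_cancel_left₀ hκ.ne',
    Real.norm_of_nonneg (mul_pos hκ hl).le]
  rw [mul_assoc, ← Real.exp_add]
  congr 2
  ring

/-- Dilating both variables of a correlated Gaussian pair trades Gaussian weights for a change of
the correlation. -/
lemma integral_integral_eq_of_dilation {f h : 𝔼 → ℝ} {q₁ q₂ α β s σ ρ τ κ l m : ℝ}
    (hf : ∀ x, 0 < f x) (hh : ∀ x, 0 < h x) (hα : q₁ * α = 1) (hβ : q₂ * β = q₂ - 1) (hσ : 0 < σ)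
    (hτ : 0 < τ) (hl : 0 < l) (hm : 0 < m)
    (hv : l ^ 2 / σ ^ 2 = α * (κ ^ 2 * l ^ 2 - 1) + 1 / τ ^ 2)
    (hx : s ^ 2 * m ^ 2 / σ ^ 2 + m ^ 2 = β * (1 ^ 2 * m ^ 2 - 1) + ρ ^ 2 / τ ^ 2 + 1)
    (hvx : l * m * s / σ ^ 2 = ρ / τ ^ 2) :
    ∫ x, h x ^ (q₂ - 1) * ∫ y, f (s • x + σ • y) ∂stdGaussian 𝔼 ∂stdGaussian 𝔼 =
      (l * m * τ / σ) ^ n * ∫ x, ∫ y,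
        (f (l • (ρ • x + τ • y)) ^ q₁ *
          Real.exp (-(κ ^ 2 * l ^ 2 - 1) * ‖ρ • x + τ • y‖ ^ 2 / 2)) ^ α *
        (h (m • x) ^ q₂ * Real.exp (-(1 ^ 2 * m ^ 2 - 1) * ‖x‖ ^ 2 / 2)) ^ β
        ∂stdGaussian 𝔼 ∂stdGaussian 𝔼 := by
  have hR : ∀ x : 𝔼, ∫ y, (f (l • (ρ • x + τ • y)) ^ q₁ *
      Real.exp (-(κ ^ 2 * l ^ 2 - 1) * ‖ρ • x + τ • y‖ ^ 2 / 2)) ^ α *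
      (h (m • x) ^ q₂ * Real.exp (-(1 ^ 2 * m ^ 2 - 1) * ‖x‖ ^ 2 / 2)) ^ β ∂stdGaussian 𝔼 =
      (2 * π) ^ (-(n : ℝ) / 2) * (1 / τ) ^ n * ∫ v, (f (l • v) ^ q₁ *
      Real.exp (-(κ ^ 2 * l ^ 2 - 1) * ‖v‖ ^ 2 / 2)) ^ α *
      (h (m • x) ^ q₂ * Real.exp (-(1 ^ 2 * m ^ 2 - 1) * ‖x‖ ^ 2 / 2)) ^ β *
      Real.exp (-‖v - ρ • x‖ ^ 2 / (2 * τ ^ 2)) := by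
    intro x
    have := integral_smul_add_smul_stdGaussian (fun v => (f (l • v) ^ q₁ *
      Real.exp (-(κ ^ 2 * l ^ 2 - 1) * ‖v‖ ^ 2 / 2)) ^ α *
      (h (m • x) ^ q₂ * Real.exp (-(1 ^ 2 * m ^ 2 - 1) * ‖x‖ ^ 2 / 2)) ^ β) ρ hτ one_pos x
    simpa only [one_smul] using this
  have hpt : ∀ x v : 𝔼, h (m • x) ^ (q₂ - 1) *
      (f (l • v) * Real.exp (-‖l • v - s • m • x‖ ^ 2 / (2 * σ ^ 2))) *
        Real.exp (-‖m • x‖ ^ 2 / 2) =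
      (f (l • v) ^ q₁ * Real.exp (-(κ ^ 2 * l ^ 2 - 1) * ‖v‖ ^ 2 / 2)) ^ α *
      (h (m • x) ^ q₂ * Real.exp (-(1 ^ 2 * m ^ 2 - 1) * ‖x‖ ^ 2 / 2)) ^ β *
      Real.exp (-‖v - ρ • x‖ ^ 2 / (2 * τ ^ 2)) * Real.exp (-‖x‖ ^ 2 / 2) := by
    intro x v
    have hf' := hf (l • v)
    have hh' := hh (m • x)
    rw [Real.mul_rpow (by positivity) (by positivity),
      Real.mul_rpow (by positivity) (by positivity),
      ← Real.rpow_mul hf'.le, ← Real.rpow_mul hh'.le, hα, hβ, Real.rpow_one, ← Real.exp_mul,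
      ← Real.exp_mul]
    have e : -‖l • v - s • m • x‖ ^ 2 / (2 * σ ^ 2) + -‖m • x‖ ^ 2 / 2 =
        -(κ ^ 2 * l ^ 2 - 1) * ‖v‖ ^ 2 / 2 * α + -(1 ^ 2 * m ^ 2 - 1) * ‖x‖ ^ 2 / 2 * β +
        -‖v - ρ • x‖ ^ 2 / (2 * τ ^ 2) + -‖x‖ ^ 2 / 2 := by
      simp only [norm_sub_sq_real, norm_smul, mul_pow, Real.norm_eq_abs, sq_abs, inner_smul_left,
        inner_smul_right, conj_trivial]
      have e1 : ∀ A B : ℝ, A / (2 * B ^ 2) = A * (1 / B ^ 2) / 2 := fun A B => by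
        rw [mul_comm 2, div_mul_eq_div_div, mul_one_div]
      rw [e1, e1]
      rw [div_eq_mul_one_div] at hv hx hvx
      rw [div_eq_mul_one_div ρ] at hvx
      rw [div_eq_mul_one_div (ρ ^ 2)] at hx
      linear_combination (-‖v‖ ^ 2 / 2) * hv - ‖x‖ ^ 2 / 2 * hx + ⟪v, x⟫ * hvx
    calc _ = f (l • v) * h (m • x) ^ (q₂ - 1) *
          (Real.exp (-‖l • v - s • m • x‖ ^ 2 / (2 * σ ^ 2)) * Real.exp (-‖m • x‖ ^ 2 / 2)) := by
          ring
      _ = _ := by rw [← Real.exp_add, e, Real.exp_add, Real.exp_add, Real.exp_add]; ring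
  simp_rw [hR, integral_smul_add_smul_stdGaussian f s hσ hl]
  rw [integral_stdGaussian_eq, integral_stdGaussian_eq]
  have h2 := Measure.integral_comp_smul_of_nonneg volume
    (fun x : 𝔼 => h x ^ (q₂ - 1) * ((2 * π) ^ (-(n : ℝ) / 2) * (l / σ) ^ n *
      ∫ v, f (l • v) * Real.exp (-‖l • v - s • x‖ ^ 2 / (2 * σ ^ 2))) * Real.exp (-‖x‖ ^ 2 / 2))
    m (hR := hm.le)
  rw [finrank_euclideanSpace_fin, smul_eq_mul, eq_inv_mul_iff_mul_eq₀ (by positivity)] at h2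
  rw [← h2]
  have e1 : ∀ x : 𝔼, h (m • x) ^ (q₂ - 1) * ((2 * π) ^ (-(n : ℝ) / 2) * (l / σ) ^ n *
      ∫ v, f (l • v) * Real.exp (-‖l • v - s • m • x‖ ^ 2 / (2 * σ ^ 2))) *
      Real.exp (-‖m • x‖ ^ 2 / 2) = (2 * π) ^ (-(n : ℝ) / 2) * (l / σ) ^ n *
      ∫ v, h (m • x) ^ (q₂ - 1) *
      (f (l • v) * Real.exp (-‖l • v - s • m • x‖ ^ 2 / (2 * σ ^ 2))) *
        Real.exp (-‖m • x‖ ^ 2 / 2) := by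
    intro x
    rw [integral_mul_const, integral_const_mul]
    ring
  have e2 : ∀ (A : ℝ) (g : 𝔼 → 𝔼 → ℝ), ∫ x, A * (∫ v, g x v) * Real.exp (-‖x‖ ^ 2 / 2) =
      A * ∫ x, ∫ v, g x v * Real.exp (-‖x‖ ^ 2 / 2) := by
    intro A g
    simp_rw [integral_mul_const, mul_assoc]
    rw [integral_const_mul]
  simp_rw [e1, hpt]
  rw [integral_const_mul, e2]
  simp only [div_pow, mul_pow, one_pow]
  field_simp

end ChangeOfVariables

/-! ### The dimensional bound -/

section Dimensional

variable {n : ℕ}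

local notation "𝔼" => EuclideanSpace ℝ (Fin n)

lemma integral_integral_rpow_mul_rpow_le {α β s σ : ℝ} (hα : 0 < α)
    (hα1 : α < 1) (hβ : 0 < β) (hβ1 : β < 1) (hs : s ^ 2 * (α * β) ≤ (1 - α) * (1 - β))
    (hsσ : s ^ 2 + σ ^ 2 = 1) {F G : 𝔼 → ℝ} (hF : Measurable F) (hG : Measurable G)
    (hF0 : ∀ x, 0 ≤ F x) (hG0 : ∀ x, 0 ≤ G x) (hFi : Integrable F (stdGaussian 𝔼))
    (hGi : Integrable G (stdGaussian 𝔼)) :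
    ∫ x, ∫ y, F (s • x + σ • y) ^ α * G x ^ β ∂stdGaussian 𝔼 ∂stdGaussian 𝔼 ≤
      (∫ z, F z ∂stdGaussian 𝔼) ^ α * (∫ z, G z ∂stdGaussian 𝔼) ^ β := by
  have h := lintegral_rpow_mul_rpow_le hα hα1 hβ hβ1 hs hsσ hF hG hF0 hG0 hFi hGi
  have hm : Measurable fun p : 𝔼 × 𝔼 => F (s • p.1 + σ • p.2) ^ α * G p.1 ^ β :=
    ((hF.comp (by fun_prop : Measurable fun p : 𝔼 × 𝔼 => s • p.1 + σ • p.2)).pow_const α).mul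
      ((hG.comp measurable_fst).pow_const β)
  have h0 : ∀ p : 𝔼 × 𝔼, 0 ≤ F (s • p.1 + σ • p.2) ^ α * G p.1 ^ β := fun p =>
    mul_nonneg (Real.rpow_nonneg (hF0 _) _) (Real.rpow_nonneg (hG0 _) _)
  have hi : Integrable (fun p : 𝔼 × 𝔼 => F (s • p.1 + σ • p.2) ^ α * G p.1 ^ β)
      ((stdGaussian 𝔼).prod (stdGaussian 𝔼)) :=
    (lintegral_ofReal_ne_top_iff_integrable hm.aestronglyMeasurable (.of_forall h0)).1
      (ne_top_of_le_ne_top ENNReal.ofReal_ne_top h)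
  rw [← integral_prod (f := fun p : 𝔼 × 𝔼 => F (s • p.1 + σ • p.2) ^ α * G p.1 ^ β) hi]
  rw [← ofReal_integral_eq_lintegral_ofReal hi (.of_forall h0)] at h
  refine (ENNReal.ofReal_le_ofReal_iff ?_).1 h
  exact mul_nonneg (Real.rpow_nonneg (integral_nonneg hF0) _)
    (Real.rpow_nonneg (integral_nonneg hG0) _)

lemma eLpNorm_eq_ofReal_integral_rpow {Ω : Type*} [MeasurableSpace Ω] {μ : Measure Ω}
    [IsFiniteMeasure μ] {g : Ω → ℝ} (hg : Measurable g) {c C : ℝ} (hc : 0 < c)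
    (hgc : ∀ x, c ≤ g x) (hgC : ∀ x, g x ≤ C) {q : ℝ} (hq : 0 < q) :
    eLpNorm g (ENNReal.ofReal q) μ = ENNReal.ofReal ((∫ x, g x ^ q ∂μ) ^ (1 / q)) := by
  have hLp : MemLp g (ENNReal.ofReal q) μ := .of_bound hg.aestronglyMeasurable C
    (.of_forall fun x => by rw [Real.norm_of_nonneg (hc.le.trans (hgc x))]; exact hgC x)
  rw [hLp.eLpNorm_eq_integral_rpow_norm (by simpa using hq) (by simp), ENNReal.toReal_ofReal hq.le,
    one_div]
  congr 2
  refine integral_congr_ae (.of_forall fun x => ?_)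
  simp only [Real.norm_of_nonneg (hc.le.trans (hgc x))]

/-- The integral form of the dimensional bound, in terms of abstract dilation parameters. -/
lemma integral_rpow_le_of_dilation {f h : 𝔼 → ℝ} {q₁ q₂ s σ ρ τ κ l m c C : ℝ}
    (hf : Measurable f) (hc : 0 < c) (hfc : ∀ x, c ≤ f x) (hfC : ∀ x, f x ≤ C)
    (hh : Measurable h) (hhc : ∀ x, c ≤ h x) (hhC : ∀ x, h x ≤ C)
    (hhf : ∀ x, h x = ∫ y, f (s • x + σ • y) ∂stdGaussian 𝔼)
    (hq₁ : 1 < q₁) (hq₂ : 1 < q₂) (hσ : 0 < σ) (hτ : 0 < τ) (hl : 0 < l) (hm : 0 < m) (hκ : 0 < κ)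
    (hρτ : ρ ^ 2 + τ ^ 2 = 1) (hρ : ρ ^ 2 * (q₂ - 1) ≤ q₁ - 1)
    (hv : l ^ 2 / σ ^ 2 = 1 / q₁ * (κ ^ 2 * l ^ 2 - 1) + 1 / τ ^ 2)
    (hx : s ^ 2 * m ^ 2 / σ ^ 2 + m ^ 2 = (1 - 1 / q₂) * (1 ^ 2 * m ^ 2 - 1) + ρ ^ 2 / τ ^ 2 + 1)
    (hvx : l * m * s / σ ^ 2 = ρ / τ ^ 2) :
    (∫ x, h x ^ q₂ ∂stdGaussian 𝔼) ^ (1 / q₂) ≤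
      (l * m * τ / σ * (κ * l) ^ (-(1 / q₁)) * m ^ (1 / q₂ - 1)) ^ n *
        (∫ x, f (κ⁻¹ • x) ^ q₁ ∂stdGaussian 𝔼) ^ (1 / q₁) := by
  have hq₁0 : 0 < q₁ := by linarith
  have hq₂0 : 0 < q₂ := by linarith
  have hf0 : ∀ x, 0 < f x := fun x => hc.trans_le (hfc x)
  have hh0 : ∀ x, 0 < h x := fun x => hc.trans_le (hhc x)
  have hpos : ∀ {g : 𝔼 → ℝ} {q : ℝ}, 0 < q → Measurable g → (∀ x, c ≤ g x) → (∀ x, g x ≤ C) →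
      0 < ∫ x, g x ^ q ∂stdGaussian 𝔼 := by
    intro g q hq hg hgc hgC
    have hi : Integrable (fun x => g x ^ q) (stdGaussian 𝔼) :=
      .of_bound (hg.pow_const q).aestronglyMeasurable (C ^ q) (.of_forall fun x => by
        have h0 := hc.le.trans (hgc x)
        rw [Real.norm_of_nonneg (by positivity)]
        exact Real.rpow_le_rpow h0 (hgC x) hq.le)
    calc 0 < c ^ q := by positivity
      _ = ∫ _, c ^ q ∂stdGaussian 𝔼 := by simp
      _ ≤ _ := integral_mono (integrable_const _) hi fun x =>
        Real.rpow_le_rpow hc.le (hgc x) hq.le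
  have hI := hpos hq₂0 hh hhc hhC
  have hP : 0 < ∫ x, f (κ⁻¹ • x) ^ q₁ ∂stdGaussian 𝔼 :=
    hpos hq₁0 (hf.comp (by fun_prop : Measurable fun x : 𝔼 => κ⁻¹ • x)) (fun _ => hfc _)
      (fun _ => hfC _)
  have hFint := integral_smul_mul_exp_stdGaussian (fun x : 𝔼 => f x ^ q₁) hκ hl
  have hGint := integral_smul_mul_exp_stdGaussian (fun x : 𝔼 => h x ^ q₂) one_pos hm
  simp only [inv_one, one_smul, one_mul] at hGint
  set I := ∫ x, h x ^ q₂ ∂stdGaussian 𝔼 with hIdef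
  set P := ∫ x, f (κ⁻¹ • x) ^ q₁ ∂stdGaussian 𝔼
  have hα1 : 1 / q₁ < 1 := by rw [div_lt_one hq₁0]; exact hq₁
  have hα0 : 0 < 1 / q₁ := by positivity
  have hβ0 : 0 < 1 / q₂ := by positivity
  have hβ1 : 1 / q₂ < 1 := by rw [div_lt_one hq₂0]; exact hq₂
  have hsq : ρ ^ 2 * (1 / q₁ * (1 - 1 / q₂)) ≤ (1 - 1 / q₁) * (1 - (1 - 1 / q₂)) := by
    have e1 : ρ ^ 2 * (1 / q₁ * (1 - 1 / q₂)) = ρ ^ 2 * (q₂ - 1) / (q₁ * q₂) := by field_simp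
    have e2 : (1 - 1 / q₁) * (1 - (1 - 1 / q₂)) = (q₁ - 1) / (q₁ * q₂) := by field_simp; ring
    rw [e1, e2]
    gcongr
  have hIeq : I = ∫ x, h x ^ (q₂ - 1) * ∫ y, f (s • x + σ • y) ∂stdGaussian 𝔼 ∂stdGaussian 𝔼 := by
    refine integral_congr_ae (.of_forall fun x => ?_)
    simp only [← hhf]
    rw [← Real.rpow_add_one (hh0 x).ne', sub_add_cancel]
  have hmain : I ≤ (l * m * τ / σ) ^ n *
      ((((κ * l) ^ n)⁻¹ * P) ^ (1 / q₁) * ((m ^ n)⁻¹ * I) ^ (1 - 1 / q₂)) := by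
    rw [integral_integral_eq_of_dilation (α := 1 / q₁) (β := 1 - 1 / q₂) hf0 hh0
      (by field_simp) (by field_simp) hσ hτ hl hm hv hx hvx] at hIeq
    rw [← hFint, ← hGint]
    nth_rewrite 1 [hIeq]
    refine mul_le_mul_of_nonneg_left ?_ (by positivity)
    refine integral_integral_rpow_mul_rpow_le (α := 1 / q₁) (β := 1 - 1 / q₂) (s := ρ) (σ := τ)
      (F := fun v => f (l • v) ^ q₁ * Real.exp (-(κ ^ 2 * l ^ 2 - 1) * ‖v‖ ^ 2 / 2))
      (G := fun x => h (m • x) ^ q₂ * Real.exp (-(1 ^ 2 * m ^ 2 - 1) * ‖x‖ ^ 2 / 2))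
      hα0 hα1 (by linarith) (by linarith) hsq hρτ ?_ ?_ (fun x => ?_) (fun x => ?_) ?_ ?_
    · exact ((hf.comp (by fun_prop : Measurable fun x : 𝔼 => l • x)).pow_const q₁).mul (by fun_prop)
    · exact ((hh.comp (by fun_prop : Measurable fun x : 𝔼 => m • x)).pow_const q₂).mul (by fun_prop)
    · have := hf0 (l • x); positivity
    · have := hh0 (m • x); positivity
    · refine .of_integral_ne_zero ?_
      rw [hFint]; positivity
    · refine .of_integral_ne_zero ?_
      rw [hGint]; positivity
  have hsplit : I = I ^ (1 / q₂) * I ^ (1 - 1 / q₂) := by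
    rw [← Real.rpow_add hI]; simp
  have hIβ : 0 < I ^ (1 - 1 / q₂) := by positivity
  have hpow : ∀ {b : ℝ}, 0 < b → ∀ r : ℝ, ((b ^ n)⁻¹) ^ r = (b ^ (-r)) ^ n := by
    intro b hb r
    rw [← Real.rpow_natCast, ← Real.rpow_natCast, ← Real.rpow_neg hb.le, ← Real.rpow_mul hb.le,
      ← Real.rpow_mul hb.le]
    congr 1; ring
  refine le_of_mul_le_mul_right ?_ hIβ
  rw [← hsplit]
  refine hmain.trans_eq ?_
  rw [Real.mul_rpow (by positivity) hP.le, Real.mul_rpow (by positivity) hI.le,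
    hpow (by positivity), hpow hm, neg_sub, mul_pow _ (m ^ _), mul_pow _ ((κ * l) ^ _)]
  ring

lemma dilation_constant_eq {q₁ q₂ a t σ τ l m : ℝ} (hq₁ : 1 < q₁) (hq : q₁ < q₂) (hσ : 0 < σ)
    (hτ : 0 < τ) (hl : 0 < l) (hm : 0 < m) (hσ2 : σ ^ 2 = 1 - Real.exp (-2 * t))
    (hτ2 : τ ^ 2 = (q₂ - q₁) / (q₂ - 1))
    (hl2 : l ^ 2 = σ ^ 2 * Real.exp (-a) * (q₁ - 1) / (Real.exp (-2 * t) * (q₂ - q₁)))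
    (hm2 : m ^ 2 = σ ^ 2 * (q₂ - 1) / (Real.exp (-a) * (q₂ - q₁))) :
    (l * m * τ / σ * (Real.exp (a / 2) * l) ^ (-(1 / q₁)) * m ^ (1 / q₂ - 1)) ^ n =
      (((q₁ - 1) / Real.exp (-2 * t)) ^ (1 - 1 / q₁) *
        ((q₂ - 1) / Real.exp (-a)) ^ (1 / q₂ - 1) *
        ((1 - Real.exp (-2 * t)) / (q₂ - q₁)) ^ (1 / q₂ - 1 / q₁)) ^ ((n : ℝ) / 2) := by
  have h1 : 0 < q₁ - 1 := by linarith
  have h2 : 0 < q₂ - 1 := by linarith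
  have h3 : 0 < q₂ - q₁ := by linarith
  rw [← hσ2]
  refine Real.log_injOn_pos (Set.mem_Ioi.2 (by positivity)) (Set.mem_Ioi.2 (by positivity)) ?_
  have e : Real.exp (-a) ≠ 0 := (Real.exp_pos _).ne'
  have e' : Real.exp (-2 * t) ≠ 0 := (Real.exp_pos _).ne'
  have ll : 2 * Real.log l =
      2 * Real.log σ - a + Real.log (q₁ - 1) + 2 * t - Real.log (q₂ - q₁) := by
    have := congrArg Real.log hl2
    rw [Real.log_div (by positivity) (by positivity), Real.log_mul (by positivity) h1.ne',
      Real.log_mul (by positivity) e, Real.log_mul e' h3.ne', Real.log_exp, Real.log_exp,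
      Real.log_pow, Real.log_pow] at this
    push_cast at this
    linarith
  have lm : 2 * Real.log m = 2 * Real.log σ + Real.log (q₂ - 1) + a - Real.log (q₂ - q₁) := by
    have := congrArg Real.log hm2
    rw [Real.log_div (by positivity) (by positivity), Real.log_mul (by positivity) h2.ne',
      Real.log_mul e h3.ne', Real.log_exp, Real.log_pow, Real.log_pow] at this
    push_cast at this
    linarith
  have lτ : 2 * Real.log τ = Real.log (q₂ - q₁) - Real.log (q₂ - 1) := by
    have := congrArg Real.log hτ2
    rw [Real.log_div h3.ne' h2.ne', Real.log_pow] at this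
    exact_mod_cast this
  rw [Real.log_pow, Real.log_rpow (by positivity), Real.log_mul (by positivity) (by positivity),
    Real.log_mul (by positivity) (by positivity), Real.log_div (by positivity) hσ.ne',
    Real.log_mul (by positivity) hτ.ne', Real.log_mul hl.ne' hm.ne', Real.log_rpow (by positivity),
    Real.log_rpow hm, Real.log_mul (Real.exp_pos _).ne' hl.ne', Real.log_exp,
    Real.log_mul (by positivity) (by positivity), Real.log_mul (by positivity) (by positivity),
    Real.log_rpow (by positivity), Real.log_rpow (by positivity), Real.log_rpow (by positivity),
    Real.log_div h1.ne' e', Real.log_div h2.ne' e, Real.log_div (by positivity) h3.ne',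
    Real.log_exp, Real.log_exp, Real.log_pow]
  push_cast
  linear_combination (n : ℝ) / 2 * ((1 - 1 / q₁) * ll + 1 / q₂ * lm + lτ)

end Dimensional

/-- The dilation parameters of the Ornstein–Uhlenbeck bound satisfy the identities required by
`integral_rpow_le_of_dilation`. -/
lemma dilation_parameters_identities {q₁ q₂ s σ E κ ρ τ l m : ℝ} (hq₁ : 1 < q₁) (hq : q₁ < q₂)
    (hs : 0 < s) (hE : 0 < E) (hσ : 0 < σ) (hρ : 0 < ρ) (hτ : 0 < τ) (hl : 0 < l) (hm : 0 < m)
    (hκ : κ ^ 2 = E⁻¹) (hrel : q₁ * E = 1 + s ^ 2 * (q₂ - 1)) (hσ2 : σ ^ 2 = 1 - s ^ 2)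
    (hρ2 : ρ ^ 2 = (q₁ - 1) / (q₂ - 1)) (hτ2 : τ ^ 2 = (q₂ - q₁) / (q₂ - 1))
    (hl2 : l ^ 2 = σ ^ 2 * E * (q₁ - 1) / (s ^ 2 * (q₂ - q₁)))
    (hm2 : m ^ 2 = σ ^ 2 * (q₂ - 1) / (E * (q₂ - q₁))) :
    l ^ 2 / σ ^ 2 = 1 / q₁ * (κ ^ 2 * l ^ 2 - 1) + 1 / τ ^ 2 ∧
      s ^ 2 * m ^ 2 / σ ^ 2 + m ^ 2 = (1 - 1 / q₂) * (1 ^ 2 * m ^ 2 - 1) + ρ ^ 2 / τ ^ 2 + 1 ∧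
      l * m * s / σ ^ 2 = ρ / τ ^ 2 := by
  have h1 : 0 < q₁ - 1 := by linarith
  have h2 : 0 < q₂ - 1 := by linarith
  have h3 : 0 < q₂ - q₁ := by linarith
  have hq₁0 : 0 < q₁ := by linarith
  have hq₂0 : 0 < q₂ := by linarith
  refine ⟨?_, ?_, ?_⟩
  · have e : l ^ 2 / σ ^ 2 = E * (q₁ - 1) / (s ^ 2 * (q₂ - q₁)) := by rw [hl2]; field_simp
    have e' : κ ^ 2 * l ^ 2 = (1 - s ^ 2) * (q₁ - 1) / (s ^ 2 * (q₂ - q₁)) := by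
      rw [hl2, hκ, hσ2]; field_simp
    rw [e, e', hτ2]
    field_simp
    linear_combination (q₁ - 1) * hrel
  · have e : s ^ 2 * m ^ 2 / σ ^ 2 = s ^ 2 * (q₂ - 1) / (E * (q₂ - q₁)) := by
      rw [hm2]; field_simp
    have e' : ρ ^ 2 / τ ^ 2 = (q₁ - 1) / (q₂ - q₁) := by rw [hρ2, hτ2]; field_simp
    rw [e, e', hm2, hσ2]
    field_simp
    linear_combination -(q₂ - 1) * hrel
  · refine (sq_eq_sq₀ (by positivity) (by positivity)).1 ?_
    rw [div_pow, div_pow, mul_pow, mul_pow, hl2, hm2, hρ2, hτ2]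
    field_simp

theorem dimensional_hypercontractivity_OU (n : ℕ) (hn : 1 ≤ n) (t : ℝ) (ht : 0 < t) (a : ℝ)
    (q₁ q₂ : ℝ) (hq₁ : 1 < q₁) (hq : q₁ < q₂)
    (hrel : q₂ - 1 = Real.exp (2 * t) * (q₁ * Real.exp (-a) - 1))
    (f : EuclideanSpace ℝ (Fin n) → ℝ) (hf : Measurable f)
    (c C : ℝ) (hc : 0 < c) (hbd : ∀ x, c ≤ f x ∧ f x ≤ C) :
    eLpNorm (OU n t f) (ENNReal.ofReal q₂) (gaussianMeasure n) ≤
      ENNReal.ofReal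
        ((((q₁ - 1) / Real.exp (-2 * t)) ^ (1 - 1 / q₁) *
          ((q₂ - 1) / Real.exp (-a)) ^ (1 / q₂ - 1) *
          ((1 - Real.exp (-2 * t)) / (q₂ - q₁)) ^ (1 / q₂ - 1 / q₁)) ^ ((n : ℝ) / 2)) *
        eLpNorm (dilation n (-a) f) (ENNReal.ofReal q₁) (gaussianMeasure n) := by
  have h1 : 0 < q₁ - 1 := by linarith
  have h2 : 0 < q₂ - 1 := by linarith
  have h3 : 0 < q₂ - q₁ := by linarith
  have hfc := fun x => (hbd x).1
  have hfC := fun x => (hbd x).2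
  have hs2 : Real.exp (-t) ^ 2 = Real.exp (-2 * t) := by
    rw [← Real.exp_nat_mul]; congr 1; push_cast; ring
  have hσ0 : 0 < 1 - Real.exp (-2 * t) := by
    have : Real.exp (-2 * t) < 1 := by rw [Real.exp_lt_one_iff]; linarith
    linarith
  set σ := Real.sqrt (1 - Real.exp (-2 * t)) with hσdef
  have hσ : 0 < σ := Real.sqrt_pos.2 hσ0
  have hσ2 : σ ^ 2 = 1 - Real.exp (-2 * t) := Real.sq_sqrt hσ0.le
  have hsqrt : ∀ {b : ℝ}, 0 < b → ∃ r : ℝ, 0 < r ∧ r ^ 2 = b := fun {b} hb =>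
    ⟨Real.sqrt b, Real.sqrt_pos.2 hb, Real.sq_sqrt hb.le⟩
  obtain ⟨τ, hτ, hτ2⟩ := hsqrt (div_pos h3 h2)
  obtain ⟨ρ, hρ, hρ2⟩ := hsqrt (div_pos h1 h2)
  obtain ⟨l, hl, hl2⟩ := hsqrt (b := σ ^ 2 * Real.exp (-a) * (q₁ - 1) /
    (Real.exp (-2 * t) * (q₂ - q₁))) (by positivity)
  obtain ⟨m, hm, hm2⟩ := hsqrt (b := σ ^ 2 * (q₂ - 1) / (Real.exp (-a) * (q₂ - q₁)))
    (by positivity)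
  have hκ : Real.exp (a / 2) ^ 2 = (Real.exp (-a))⁻¹ := by
    rw [← Real.exp_neg, ← Real.exp_nat_mul]; congr 1; push_cast; ring
  have hκinv : (Real.exp (a / 2))⁻¹ = Real.exp (-a / 2) := by rw [← Real.exp_neg, neg_div]
  have hrel' : q₁ * Real.exp (-a) = 1 + Real.exp (-t) ^ 2 * (q₂ - 1) := by
    rw [hs2, hrel, ← mul_assoc, ← Real.exp_add]
    simp
  obtain ⟨hv, hx, hvx⟩ := dilation_parameters_identities hq₁ hq (Real.exp_pos (-t))
    (Real.exp_pos (-a)) hσ hρ hτ hl hm hκ hrel' (by rw [hs2, hσ2]) hρ2 hτ2 (by rw [hs2, hl2]) hm2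
  have hOU : ∀ x, OU n t f x = ∫ y, f (Real.exp (-t) • x + σ • y) ∂stdGaussian _ := fun x => by
    rw [OU, gaussianMeasure_eq_stdGaussian]
  have hinteg : ∀ x, Integrable (fun y => f (Real.exp (-t) • x + σ • y))
      (stdGaussian (EuclideanSpace ℝ (Fin n))) := fun x =>
    .of_bound (hf.comp (by fun_prop)).aestronglyMeasurable C (.of_forall fun y => by
      rw [Real.norm_of_nonneg (hc.le.trans (hfc _))]; exact hfC _)
  have hOUm : Measurable (OU n t f) := by
    have hm : StronglyMeasurable fun p : EuclideanSpace ℝ (Fin n) × EuclideanSpace ℝ (Fin n) =>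
        f (Real.exp (-t) • p.1 + σ • p.2) := (hf.comp (by fun_prop)).stronglyMeasurable
    rw [funext hOU]
    exact hm.integral_prod_right.measurable
  have hOUc : ∀ x, c ≤ OU n t f x := fun x => by
    rw [hOU]
    simpa using integral_mono (integrable_const c) (hinteg x) fun _ => hfc _
  have hOUC : ∀ x, OU n t f x ≤ C := fun x => by
    rw [hOU]
    simpa using integral_mono (hinteg x) (integrable_const C) fun _ => hfC _
  have hdil : Measurable (dilation n (-a) f) :=
    hf.comp (by fun_prop : Measurable fun x : EuclideanSpace ℝ (Fin n) => Real.exp (-a / 2) • x)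
  rw [gaussianMeasure_eq_stdGaussian,
    eLpNorm_eq_ofReal_integral_rpow hOUm hc hOUc hOUC (by linarith),
    eLpNorm_eq_ofReal_integral_rpow hdil hc (fun _ => hfc _) (fun _ => hfC _) (by linarith),
    ← ENNReal.ofReal_mul (by positivity), ← dilation_constant_eq hq₁ hq hσ hτ hl hm hσ2 hτ2 hl2 hm2]
  refine ENNReal.ofReal_le_ofReal ?_
  have h := integral_rpow_le_of_dilation hf hc hfc hfC hOUm hOUc hOUC hOU hq₁ (hq₁.trans hq) hσ hτ
    hl hm (Real.exp_pos (a / 2)) (by rw [hρ2, hτ2]; field_simp; ring) (by rw [hρ2]; field_simp; rfl)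
    hv hx hvx
  simpa only [hκinv, dilation] using h
end

section
/- Let n ≥ 1, let u > 0, t > 0 and let q₁ > q₂ > 0 satisfy q₁ = q₂ + t/(2u). Then for every bounded Lipschitz function f : ℝ^n → ℝ and every x ∈ ℝ^n, ( P_u( e^{q₁ Q_t f} )(x) )^{1/q₁} ≤ ( P_u( e^{q₂ f} )(x) )^{1/q₂} (local hypercontractivity of the Hamilton–Jacobi semigroup for the heat semigroup on ℝ^n, which satisfies CD(0,∞)). -/
open MeasureTheory Real

/-- Euclidean heat semigroup, with `heat n 0 f = f`. -/
noncomputable def heat (n : ℕ) (t : ℝ) (f : EuclideanSpace ℝ (Fin n) → ℝ)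
    (x : EuclideanSpace ℝ (Fin n)) : ℝ :=
  if t = 0 then f x
  else (4 * π * t) ^ (-(n : ℝ) / 2) * ∫ y, f y * Real.exp (-‖x - y‖ ^ 2 / (4 * t))

/-- Hopf-Lax (Hamilton-Jacobi) semigroup on `ℝ^n`. -/
noncomputable def hopfLax (n : ℕ) (t : ℝ) (f : EuclideanSpace ℝ (Fin n) → ℝ)
    (x : EuclideanSpace ℝ (Fin n)) : ℝ :=
  ⨅ y : EuclideanSpace ℝ (Fin n), (f y + ‖x - y‖ ^ 2 / (2 * t))

open scoped ENNReal Pointwise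

/-- The measure `μ` satisfies the Prékopa–Leindler inequality, for all weights and all measurable
functions. -/
def PrekopaLeindler {E : Type*} [AddCommGroup E] [Module ℝ E] [MeasurableSpace E]
    (μ : Measure E) : Prop :=
  ∀ a b : ℝ, 0 < a → 0 < b → a + b = 1 → ∀ f g h : E → ℝ≥0∞,
    Measurable f → Measurable g → Measurable h →
    (∀ x y, f x ^ a * g y ^ b ≤ h (a • x + b • y)) →
    (∫⁻ x, f x ∂μ) ^ a * (∫⁻ x, g x ∂μ) ^ b ≤ ∫⁻ x, h x ∂μ

/-- One-dimensional Brunn–Minkowski inequality for compact sets. -/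
theorem volume_add_volume_le_of_isCompact {A B C : Set ℝ} (hA : IsCompact A) (hB : IsCompact B)
    (hA' : A.Nonempty) (hB' : B.Nonempty) (hC : ∀ x ∈ A, ∀ y ∈ B, x + y ∈ C) :
    volume A + volume B ≤ volume C := by
  obtain ⟨p, hp, hpA⟩ := hA.exists_isGreatest hA'
  obtain ⟨q, hq, hqB⟩ := hB.exists_isLeast hB'
  have hsub : (fun x => q + x) '' A ∪ (fun y => p + y) '' B ⊆ C := by
    rintro _ (⟨x, hx, rfl⟩ | ⟨y, hy, rfl⟩)
    · simpa [add_comm] using hC x hx q hq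
    · exact hC p hp y hy
  have hdisj : AEDisjoint volume ((fun x => q + x) '' A) ((fun y => p + y) '' B) := by
    refine measure_mono_null (t := {p + q}) ?_ (by simp)
    rintro _ ⟨⟨x, hx, rfl⟩, ⟨y, hy, hxy⟩⟩
    have h1 := hpA hx
    have h2 := hqB hy
    simp only [Set.mem_singleton_iff] at hxy ⊢
    linarith
  have hmeas : NullMeasurableSet ((fun y => p + y) '' B) volume :=
    (hB.image (by fun_prop)).measurableSet.nullMeasurableSet
  calc volume A + volume B
      = volume ((fun x => q + x) '' A) + volume ((fun y => p + y) '' B) := by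
        simp only [Set.image_add_left, measure_preimage_add]
    _ = volume ((fun x => q + x) '' A ∪ (fun y => p + y) '' B) :=
        (measure_union₀ hmeas hdisj).symm
    _ ≤ volume C := measure_mono hsub

/-- One-dimensional Brunn–Minkowski inequality for measurable sets. -/
theorem volume_add_volume_le {A B C : Set ℝ} (hA : MeasurableSet A) (hB : MeasurableSet B)
    (hA' : A.Nonempty) (hB' : B.Nonempty) (hC : ∀ x ∈ A, ∀ y ∈ B, x + y ∈ C) :
    volume A + volume B ≤ volume C := by
  obtain ⟨p, hp⟩ := hA'
  obtain ⟨q, hq⟩ := hB'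
  rw [hA.measure_eq_iSup_isCompact, hB.measure_eq_iSup_isCompact]
  simp only [iSup_and']
  refine ENNReal.biSup_add_biSup_le' ⟨∅, Set.empty_subset _, isCompact_empty⟩
    ⟨∅, Set.empty_subset _, isCompact_empty⟩ ?_
  rintro K ⟨hKA, hK⟩ K' ⟨hKB, hK'⟩
  calc volume K + volume K' ≤ volume (insert p K) + volume (insert q K') := by
        gcongr <;> exact Set.subset_insert _ _
    _ ≤ volume C := volume_add_volume_le_of_isCompact (hK.insert p) (hK'.insert q)
        (Set.insert_nonempty _ _) (Set.insert_nonempty _ _) fun x hx y hy =>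
          hC x (Set.insert_subset hp hKA hx) y (Set.insert_subset hq hKB hy)

/-- One-dimensional Brunn–Minkowski inequality for convex combinations of measurable sets. -/
theorem mul_volume_add_mul_volume_le {a b : ℝ} (ha : 0 < a) (hb : 0 < b) {A B C : Set ℝ}
    (hA : MeasurableSet A) (hB : MeasurableSet B) (hA' : A.Nonempty) (hB' : B.Nonempty)
    (hC : ∀ x ∈ A, ∀ y ∈ B, a * x + b * y ∈ C) :
    ENNReal.ofReal a * volume A + ENNReal.ofReal b * volume B ≤ volume C := by
  have h := volume_add_volume_le (hA.const_smul₀ a) (hB.const_smul₀ b)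
    (hA'.smul_set (a := a)) (hB'.smul_set (a := b)) (C := C) (by
      rintro _ ⟨x, hx, rfl⟩ _ ⟨y, hy, rfl⟩
      exact hC x hx y hy)
  simpa [Measure.addHaar_smul, abs_of_pos ha, abs_of_pos hb] using h

theorem ENNReal.geom_mean_le_arith_mean2_weighted {a b : ℝ} (ha : 0 < a) (hb : 0 < b)
    (hab : a + b = 1) (x y : ℝ≥0∞) :
    x ^ a * y ^ b ≤ ENNReal.ofReal a * x + ENNReal.ofReal b * y := by
  have hpq : (a⁻¹).HolderConjugate b⁻¹ :=
    Real.holderConjugate_iff.2 ⟨(one_lt_inv₀ ha).2 (by linarith), by simpa using hab⟩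
  have h := ENNReal.young_inequality (x ^ a) (y ^ b) hpq
  rw [← ENNReal.rpow_mul, ← ENNReal.rpow_mul, mul_inv_cancel₀ ha.ne', mul_inv_cancel₀ hb.ne',
    ENNReal.rpow_one, ENNReal.rpow_one, ENNReal.ofReal_inv_of_pos ha,
    ENNReal.ofReal_inv_of_pos hb, div_eq_mul_inv, div_eq_mul_inv, inv_inv, inv_inv] at h
  rwa [mul_comm (ENNReal.ofReal a), mul_comm (ENNReal.ofReal b)]

theorem lintegral_eq_lintegral_meas_lt_of_le_one {α : Type*} [MeasurableSpace α] (μ : Measure α)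
    {f : α → ℝ≥0∞} (hf : Measurable f) (hf1 : ∀ x, f x ≤ 1) :
    ∫⁻ x, f x ∂μ = ∫⁻ r in Set.Ioi (0 : ℝ), μ {x | ENNReal.ofReal r < f x} := by
  have hfin : ∀ x, f x ≠ ∞ := fun x => ne_top_of_le_ne_top ENNReal.one_ne_top (hf1 x)
  have h := lintegral_eq_lintegral_meas_lt μ (f := fun x => (f x).toReal)
    (Filter.Eventually.of_forall fun x => ENNReal.toReal_nonneg) hf.ennreal_toReal.aemeasurable
  simp only [ENNReal.ofReal_toReal (hfin _)] at h
  rw [h]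
  refine setLIntegral_congr_fun measurableSet_Ioi fun r hr => ?_
  simp only [ENNReal.ofReal_lt_iff_lt_toReal (le_of_lt hr) (hfin _)]

/-- Arithmetic form of the one-dimensional Prékopa–Leindler inequality for functions with
supremum one. -/
theorem mul_lintegral_add_mul_lintegral_le {a b : ℝ} (ha : 0 < a) (hb : 0 < b)
    (hab : a + b = 1) {f g h : ℝ → ℝ≥0∞} (hf : Measurable f) (hg : Measurable g)
    (hh : Measurable h) (hf1 : ⨆ x, f x = 1) (hg1 : ⨆ x, g x = 1)
    (H : ∀ x y, f x ^ a * g y ^ b ≤ h (a * x + b * y)) :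
    ENNReal.ofReal a * (∫⁻ x, f x) + ENNReal.ofReal b * ∫⁻ x, g x ≤ ∫⁻ x, h x := by
  have hfle : ∀ x, f x ≤ 1 := fun x => hf1 ▸ le_iSup f x
  have hgle : ∀ x, g x ≤ 1 := fun x => hg1 ▸ le_iSup g x
  calc ENNReal.ofReal a * (∫⁻ x, f x) + ENNReal.ofReal b * ∫⁻ x, g x
      = (∫⁻ r in Set.Ioi (0 : ℝ), ENNReal.ofReal a * volume {x | ENNReal.ofReal r < f x}) +
        ∫⁻ r in Set.Ioi (0 : ℝ), ENNReal.ofReal b * volume {x | ENNReal.ofReal r < g x} := by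
        rw [lintegral_const_mul' _ _ ENNReal.ofReal_ne_top,
          lintegral_const_mul' _ _ ENNReal.ofReal_ne_top,
          lintegral_eq_lintegral_meas_lt_of_le_one _ hf hfle,
          lintegral_eq_lintegral_meas_lt_of_le_one _ hg hgle]
    _ ≤ ∫⁻ r in Set.Ioi (0 : ℝ), (ENNReal.ofReal a * volume {x | ENNReal.ofReal r < f x} +
          ENNReal.ofReal b * volume {x | ENNReal.ofReal r < g x}) := le_lintegral_add _ _
    _ ≤ ∫⁻ r in Set.Ioi (0 : ℝ), volume {x | ENNReal.ofReal r < min (h x) 1} := by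
        refine lintegral_mono fun r => ?_
        rcases lt_or_ge (ENNReal.ofReal r) 1 with hr | hr
        · refine mul_volume_add_mul_volume_le ha hb (measurableSet_lt measurable_const hf)
            (measurableSet_lt measurable_const hg) (lt_iSup_iff.1 (hr.trans_eq hf1.symm))
            (lt_iSup_iff.1 (hr.trans_eq hg1.symm)) fun x hx y hy => lt_min ?_ hr
          refine lt_of_lt_of_le ?_ (H x y)
          calc ENNReal.ofReal r = ENNReal.ofReal r ^ a * ENNReal.ofReal r ^ b := by
                rw [← ENNReal.rpow_add_of_nonneg _ _ ha.le hb.le, hab, ENNReal.rpow_one]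
            _ < f x ^ a * g y ^ b :=
                ENNReal.mul_lt_mul (ENNReal.rpow_lt_rpow hx ha) (ENNReal.rpow_lt_rpow hy hb)
        · have hF : {x | ENNReal.ofReal r < f x} = ∅ :=
            Set.eq_empty_of_forall_notMem fun x hx => (hx.trans_le (hfle x)).not_ge hr
          have hG : {x | ENNReal.ofReal r < g x} = ∅ :=
            Set.eq_empty_of_forall_notMem fun x hx => (hx.trans_le (hgle x)).not_ge hr
          simp [hF, hG]
    _ = ∫⁻ x, min (h x) 1 := (lintegral_eq_lintegral_meas_lt_of_le_one _
        (hh.min measurable_const) fun x => min_le_right _ _).symm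
    _ ≤ ∫⁻ x, h x := lintegral_mono fun x => min_le_left _ _

/-- One-dimensional Prékopa–Leindler inequality for bounded functions. -/
theorem rpow_lintegral_mul_rpow_lintegral_le_of_bounded {a b : ℝ} (ha : 0 < a) (hb : 0 < b)
    (hab : a + b = 1) {f g h : ℝ → ℝ≥0∞} (hf : Measurable f) (hg : Measurable g)
    (hh : Measurable h) (hf1 : ⨆ x, f x ≠ ∞) (hg1 : ⨆ x, g x ≠ ∞)
    (H : ∀ x y, f x ^ a * g y ^ b ≤ h (a * x + b * y)) :
    (∫⁻ x, f x) ^ a * (∫⁻ x, g x) ^ b ≤ ∫⁻ x, h x := by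
  rcases eq_or_ne (⨆ x, f x) 0 with hM | hM
  · simp [ENNReal.iSup_eq_zero.1 hM, ha]
  rcases eq_or_ne (⨆ x, g x) 0 with hN | hN
  · simp [ENNReal.iSup_eq_zero.1 hN, hb]
  set M := ⨆ x, f x with hMdef
  set N := ⨆ x, g x with hNdef
  set c := M⁻¹ ^ a * N⁻¹ ^ b with hc
  have hc0 : c ≠ 0 := by
    simp [hc, ENNReal.rpow_eq_zero_iff, hf1, hg1, hM, hN]
  have hctop : c ≠ ∞ := ENNReal.mul_ne_top
    (ENNReal.rpow_ne_top_of_nonneg ha.le (ENNReal.inv_ne_top.2 hM))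
    (ENNReal.rpow_ne_top_of_nonneg hb.le (ENNReal.inv_ne_top.2 hN))
  have key := (ENNReal.geom_mean_le_arith_mean2_weighted ha hb hab _ _).trans
    (mul_lintegral_add_mul_lintegral_le ha hb hab (hf.const_mul M⁻¹) (hg.const_mul N⁻¹)
      (hh.const_mul c)
      (by rw [← ENNReal.mul_iSup, ← hMdef, ENNReal.inv_mul_cancel hM hf1])
      (by rw [← ENNReal.mul_iSup, ← hNdef, ENNReal.inv_mul_cancel hN hg1])
      (fun x y => by
        rw [ENNReal.mul_rpow_of_nonneg _ _ ha.le, ENNReal.mul_rpow_of_nonneg _ _ hb.le,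
          mul_mul_mul_comm]
        gcongr
        exact H x y))
  rw [lintegral_const_mul _ hf, lintegral_const_mul _ hg, lintegral_const_mul _ hh,
    ENNReal.mul_rpow_of_nonneg _ _ ha.le, ENNReal.mul_rpow_of_nonneg _ _ hb.le,
    mul_mul_mul_comm] at key
  exact (ENNReal.mul_le_mul_iff_right hc0 hctop).1 key

theorem lintegral_eq_iSup_lintegral_min {α : Type*} [MeasurableSpace α] (μ : Measure α)
    {f : α → ℝ≥0∞} (hf : Measurable f) :
    ∫⁻ x, f x ∂μ = ⨆ k : ℕ, ∫⁻ x, min (f x) k ∂μ := by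
  rw [← lintegral_iSup (fun k => hf.min measurable_const)
    (fun i j hij x => min_le_min_left _ (by exact_mod_cast hij))]
  congr with x
  rw [← inf_iSup_eq, ENNReal.iSup_natCast, inf_top_eq]

theorem ENNReal.iSup_rpow {ι : Sort*} (f : ι → ℝ≥0∞) {a : ℝ} (ha : 0 < a) :
    (⨆ i, f i) ^ a = ⨆ i, f i ^ a :=
  (ENNReal.orderIsoRpow a ha).map_iSup f

theorem prekopaLeindler_real : PrekopaLeindler (volume : Measure ℝ) := by
  intro a b ha hb hab f g h hf hg hh H
  rw [lintegral_eq_iSup_lintegral_min _ hf, lintegral_eq_iSup_lintegral_min _ hg,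
    ENNReal.iSup_rpow _ ha, ENNReal.iSup_rpow _ hb, ENNReal.iSup_mul]
  refine iSup_le fun k => ?_
  rw [ENNReal.mul_iSup]
  refine iSup_le fun l => ?_
  refine rpow_lintegral_mul_rpow_lintegral_le_of_bounded ha hb hab (hf.min measurable_const)
    (hg.min measurable_const) hh ?_ ?_ fun x y => le_trans ?_ (H x y)
  · exact ne_top_of_le_ne_top (ENNReal.natCast_ne_top k) (iSup_le fun x => min_le_right _ _)
  · exact ne_top_of_le_ne_top (ENNReal.natCast_ne_top l) (iSup_le fun x => min_le_right _ _)
  · gcongr <;> exact min_le_left _ _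

namespace PrekopaLeindler

variable {E F : Type*} [AddCommGroup E] [Module ℝ E] [MeasurableSpace E]
  [AddCommGroup F] [Module ℝ F] [MeasurableSpace F] {μ : Measure E} {ν : Measure F}

theorem prod [SFinite ν] (hμ : PrekopaLeindler μ) (hν : PrekopaLeindler ν) :
    PrekopaLeindler (μ.prod ν) := by
  intro a b ha hb hab f g h hf hg hh H
  rw [lintegral_prod _ hf.aemeasurable, lintegral_prod _ hg.aemeasurable,
    lintegral_prod _ hh.aemeasurable]
  exact hμ a b ha hb hab _ _ _ hf.lintegral_prod_right' hg.lintegral_prod_right'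
    hh.lintegral_prod_right' fun x y => hν a b ha hb hab _ _ _
      (hf.comp measurable_prodMk_left) (hg.comp measurable_prodMk_left)
      (hh.comp measurable_prodMk_left) fun v w => H (x, v) (y, w)

theorem of_measurePreserving (hμ : PrekopaLeindler μ) (e : E →ₗ[ℝ] F)
    (he : MeasurePreserving e μ ν) : PrekopaLeindler ν := by
  intro a b ha hb hab f g h hf hg hh H
  rw [← he.lintegral_comp hf, ← he.lintegral_comp hg, ← he.lintegral_comp hh]
  refine hμ a b ha hb hab _ _ _ (hf.comp he.measurable) (hg.comp he.measurable)
    (hh.comp he.measurable) fun x y => ?_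
  simpa using H (e x) (e y)

end PrekopaLeindler

theorem prekopaLeindler_pi (n : ℕ) : PrekopaLeindler (volume : Measure (Fin n → ℝ)) := by
  induction n with
  | zero =>
    intro a b ha hb hab f g h hf hg hh H
    simpa [Measure.volume_pi_eq_dirac 0, lintegral_dirac' _ hf, lintegral_dirac' _ hg,
      lintegral_dirac' _ hh] using H 0 0
  | succ n ih =>
    refine (prekopaLeindler_real.prod ih).of_measurePreserving
      { toFun := fun p => Fin.cons p.1 p.2
        map_add' := fun p q => by ext i; refine Fin.cases ?_ (fun j => ?_) i <;> simp
        map_smul' := fun r p => by ext i; refine Fin.cases ?_ (fun j => ?_) i <;> simp } ?_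
    convert! (volume_preserving_piFinSuccAbove (fun _ : Fin (n + 1) => ℝ) 0).symm using 1
    ext p i
    refine Fin.cases ?_ (fun j => ?_) i <;> simp [MeasurableEquiv.piFinSuccAbove]

theorem prekopaLeindler_euclideanSpace (n : ℕ) :
    PrekopaLeindler (volume : Measure (EuclideanSpace ℝ (Fin n))) :=
  (prekopaLeindler_pi n).of_measurePreserving
    (WithLp.linearEquiv 2 ℝ (Fin n → ℝ)).symm.toLinearMap (PiLp.volume_preserving_toLp (Fin n))

theorem bddBelow_range_hopfLax {n : ℕ} {t C : ℝ} (ht : 0 < t)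
    {f : EuclideanSpace ℝ (Fin n) → ℝ} (hbd : ∀ x, |f x| ≤ C) (x : EuclideanSpace ℝ (Fin n)) :
    BddBelow (Set.range fun y => f y + ‖x - y‖ ^ 2 / (2 * t)) := by
  refine ⟨-C, ?_⟩
  rintro _ ⟨y, rfl⟩
  have h1 := neg_le_of_abs_le (hbd y)
  have h2 : 0 ≤ ‖x - y‖ ^ 2 / (2 * t) := by positivity
  simp only
  linarith

theorem measurable_hopfLax {n : ℕ} {t C : ℝ} (ht : 0 < t)
    {f : EuclideanSpace ℝ (Fin n) → ℝ} (hbd : ∀ x, |f x| ≤ C) : Measurable (hopfLax n t f) :=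
  (upperSemicontinuous_ciInf (bddBelow_range_hopfLax ht hbd) fun y =>
    Continuous.upperSemicontinuous (by fun_prop)).measurable

theorem integral_exp_neg_sq_norm_sub_div {n : ℕ} {u : ℝ} (hu : 0 < u)
    (x : EuclideanSpace ℝ (Fin n)) :
    ∫ y, exp (-‖x - y‖ ^ 2 / (4 * u)) = (4 * π * u) ^ ((n : ℝ) / 2) := by
  have h := integral_sub_left_eq_self (fun y : EuclideanSpace ℝ (Fin n) =>
    exp (-‖y‖ ^ 2 / (4 * u))) volume x
  rw [h]
  have h2 := GaussianFourier.integral_rexp_neg_mul_sq_norm (V := EuclideanSpace ℝ (Fin n))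
    (b := 1 / (4 * u)) (by positivity)
  simp only [finrank_euclideanSpace, Fintype.card_fin] at h2
  convert h2 using 1
  · congr with y
    congr 1
    ring
  · congr 1
    field_simp

theorem integrable_exp_neg_sq_norm_sub_div {n : ℕ} {u : ℝ} (hu : 0 < u)
    (x : EuclideanSpace ℝ (Fin n)) :
    Integrable fun y => exp (-‖x - y‖ ^ 2 / (4 * u)) := by
  refine Integrable.of_integral_ne_zero ?_
  rw [integral_exp_neg_sq_norm_sub_div hu]
  positivity

/-- Weighted parallelogram identity. -/
theorem sq_norm_sub_convex_combination {E : Type*} [NormedAddCommGroup E] [InnerProductSpace ℝ E]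
    {a b : ℝ} (hab : a + b = 1) (x y z : E) :
    ‖x - (a • y + b • z)‖ ^ 2 = a * ‖x - y‖ ^ 2 + b * ‖x - z‖ ^ 2 - a * b * ‖y - z‖ ^ 2 := by
  have h1 : x - (a • y + b • z) = a • (x - y) + b • (x - z) := by
    rw [show b = 1 - a by linarith]
    module
  have h2 : y - z = (x - z) - (x - y) := by abel
  have hb : b = 1 - a := by linarith
  rw [h1, h2, norm_add_sq_real, norm_sub_sq_real (x - z), norm_smul, norm_smul, inner_smul_left,
    inner_smul_right, real_inner_comm (x - y) (x - z), mul_pow, mul_pow]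
  simp only [Real.norm_eq_abs, sq_abs, conj_trivial, hb]
  ring

theorem local_hypercontractivity_hamilton_jacobi (n : ℕ) (hn : 1 ≤ n)
    (u t : ℝ) (hu : 0 < u) (ht : 0 < t)
    (q₁ q₂ : ℝ) (hq₂ : 0 < q₂) (hq : q₂ < q₁) (hrel : q₁ = q₂ + t / (2 * u))
    (f : EuclideanSpace ℝ (Fin n) → ℝ) (L : NNReal) (hLip : LipschitzWith L f)
    (C : ℝ) (hbd : ∀ x, |f x| ≤ C)
    (x : EuclideanSpace ℝ (Fin n)) :
    (heat n u (fun y => Real.exp (q₁ * hopfLax n t f y)) x) ^ (1 / q₁) ≤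
      (heat n u (fun y => Real.exp (q₂ * f y)) x) ^ (1 / q₂) := by
  have hq₁ : 0 < q₁ := hq₂.trans hq
  have hd : 0 < q₁ - q₂ := sub_pos.2 hq
  set a := q₂ / q₁ with ha
  set b := (q₁ - q₂) / q₁ with hb
  have ha0 : 0 < a := by positivity
  have hb0 : 0 < b := by positivity
  have hab : a + b = 1 := by rw [ha, hb]; field_simp; ring
  set G : EuclideanSpace ℝ (Fin n) → ℝ := fun y => exp (-‖x - y‖ ^ 2 / (4 * u)) with hG
  set F₁ : EuclideanSpace ℝ (Fin n) → ℝ := fun y => exp (q₁ * hopfLax n t f y) * G y with hF₁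
  set F₂ : EuclideanSpace ℝ (Fin n) → ℝ := fun y => exp (q₂ * f y) * G y with hF₂
  have hGm : Measurable G := by fun_prop
  have hF₁m : Measurable F₁ := ((measurable_hopfLax ht hbd).const_mul q₁).exp.mul hGm
  have hfm : Measurable f := hLip.continuous.measurable
  have hF₂m : Measurable F₂ := (hfm.const_mul q₂).exp.mul hGm
  have hF₂i : Integrable F₂ := by
    refine (integrable_exp_neg_sq_norm_sub_div hu x).bdd_mul (c := exp (q₂ * C))
      (hfm.const_mul q₂).exp.aestronglyMeasurable (Filter.Eventually.of_forall fun y => ?_)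
    rw [norm_of_nonneg (exp_pos _).le]
    gcongr
    exact (le_abs_self _).trans (hbd y)
  have hpoint : ∀ y z, F₁ y ^ a * G z ^ b ≤ F₂ (a • y + b • z) := by
    intro y z
    have hQ : hopfLax n t f y ≤ f (a • y + b • z) + ‖y - (a • y + b • z)‖ ^ 2 / (2 * t) :=
      ciInf_le (bddBelow_range_hopfLax ht hbd y) _
    have hyz : y - (a • y + b • z) = b • (y - z) := by
      rw [show a = 1 - b by linarith]
      module
    rw [hyz, norm_smul, norm_of_nonneg hb0.le, mul_pow] at hQ
    have hcoef : q₂ * (b ^ 2 / (2 * t)) = a * b / (4 * u) := by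
      have htu : t = 2 * u * (q₁ - q₂) := by rw [hrel]; field_simp; ring
      rw [htu, ha, hb]
      field_simp
      ring
    have haq : a * q₁ = q₂ := by rw [ha]; field_simp
    simp only [hF₁, hF₂, hG, ← exp_add, ← exp_mul]
    refine exp_le_exp.2 ?_
    rw [sq_norm_sub_convex_combination hab]
    have h := mul_le_mul_of_nonneg_left hQ hq₂.le
    have h3 : q₂ * (b ^ 2 * ‖y - z‖ ^ 2 / (2 * t)) = a * b / (4 * u) * ‖y - z‖ ^ 2 := by
      rw [← hcoef]; ring
    rw [mul_add, h3, ← haq] at h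
    rw [← haq]
    linear_combination h
  have hPL := prekopaLeindler_euclideanSpace n a b ha0 hb0 hab
    (fun y => ENNReal.ofReal (F₁ y)) (fun y => ENNReal.ofReal (G y))
    (fun y => ENNReal.ofReal (F₂ y)) hF₁m.ennreal_ofReal hGm.ennreal_ofReal hF₂m.ennreal_ofReal
    fun y z => by
      rw [ENNReal.ofReal_rpow_of_pos (by positivity), ENNReal.ofReal_rpow_of_pos (by positivity),
        ← ENNReal.ofReal_mul (by positivity)]
      exact ENNReal.ofReal_le_ofReal (hpoint y z)
  have hreal : (∫ y, F₁ y) ^ a * (∫ y, G y) ^ b ≤ ∫ y, F₂ y := by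
    rw [integral_eq_lintegral_of_nonneg_ae (Filter.Eventually.of_forall fun y => by positivity)
      hF₁m.aestronglyMeasurable,
      integral_eq_lintegral_of_nonneg_ae (Filter.Eventually.of_forall fun y => by positivity)
      hGm.aestronglyMeasurable,
      integral_eq_lintegral_of_nonneg_ae (Filter.Eventually.of_forall fun y => by positivity)
      hF₂m.aestronglyMeasurable, ENNReal.toReal_rpow, ENNReal.toReal_rpow, ← ENNReal.toReal_mul]
    exact ENNReal.toReal_mono hF₂i.lintegral_lt_top.ne hPL
  set c := (4 * π * u) ^ (-(n : ℝ) / 2) with hc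
  have hc0 : 0 < c := by positivity
  have hI₁ : 0 ≤ ∫ y, F₁ y := integral_nonneg fun y => by positivity
  have hcG : c * ∫ y, G y = 1 := by
    rw [integral_exp_neg_sq_norm_sub_div hu, hc, neg_div, ← rpow_add (by positivity)]
    simp
  have hIG : 0 ≤ ∫ y, G y := integral_nonneg fun y => by positivity
  have hheat : (c * ∫ y, F₁ y) ^ a ≤ c * ∫ y, F₂ y :=
    calc (c * ∫ y, F₁ y) ^ a = (c * ∫ y, F₁ y) ^ a * (c * ∫ y, G y) ^ b := by
          rw [hcG, one_rpow, mul_one]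
      _ = c * ((∫ y, F₁ y) ^ a * (∫ y, G y) ^ b) := by
          rw [mul_rpow hc0.le hI₁, mul_rpow hc0.le hIG, mul_mul_mul_comm, ← rpow_add hc0, hab,
            rpow_one]
      _ ≤ c * ∫ y, F₂ y := by gcongr
  simp only [heat, hu.ne', if_false]
  calc (c * ∫ y, F₁ y) ^ (1 / q₁) = ((c * ∫ y, F₁ y) ^ a) ^ (1 / q₂) := by
        rw [← rpow_mul (by positivity)]
        congr 1
        rw [ha]
        field_simp
    _ ≤ (c * ∫ y, F₂ y) ^ (1 / q₂) := by gcongr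
end
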